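/- arXiv:2202.10703 — 7 statements merged into one kernel-verified Lean document; each statement's English description precedes it below -/
import Mathlib

section
/- There exist α₀, δ₀ > 0 such that for every α ∈ (0, α₀) and δ ∈ (0, δ₀) there is a constant C > 0 with the following property: for every open set Ω ⊆ ℝ³, all η, ξ > 0, and every smooth map Q : Ω → Sym₀, setting A_δ = { x ∈ Ω : dist(Q(x), 𝒩) < δ }, one has ∫_{B_α(0)} H²( { x ∈ A_δ : Q(x) − Y ∈ 𝒯 } ) dY ≤ C · η · 𝓔_{η,ξ}(Q, A_δ), where the outer integral is over the ball B_α(0) ⊂ Sym₀ with respect to 5-dimensional Lebesgue measure and H² is the 2-dimensional Hausdorff measure on ℝ³. -/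
/- STATEMENT 11: There exist α₀, δ₀ > 0 such that for every α ∈ (0,α₀), δ ∈ (0,δ₀)
there is C > 0 with: for every open Ω ⊆ ℝ³, η, ξ > 0 and smooth Q : Ω → Sym₀, with
A_δ = {x ∈ Ω : dist(Q(x),𝒩) < δ},
∫_{B_α(0)⊂Sym₀} H²({x ∈ A_δ : Q(x) − Y ∈ 𝒯}) dY ≤ C·η·𝓔_{η,ξ}(Q, A_δ),
the outer integral w.r.t. 5-dimensional Lebesgue (Hausdorff) measure on Sym₀. -/

noncomputable section

open Matrix MeasureTheory Metric Set Filter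

abbrev Mat3 : Type := Matrix (Fin 3) (Fin 3) ℝ
abbrev V3 : Type := EuclideanSpace ℝ (Fin 3)
abbrev E9 : Type := EuclideanSpace ℝ (Fin 3 × Fin 3)

def toM (A : E9) : Mat3 := Matrix.of fun i j => A (i, j)

def Sym0E : Set E9 := {A | (toM A).IsSymm ∧ (toM A).trace = 0}

def unitVec (n : Fin 3 → ℝ) : Prop := ∑ i, (n i) ^ 2 = 1

def uniax (s : ℝ) (n : Fin 3 → ℝ) : Mat3 :=
  s • (Matrix.vecMulVec n n - (1 / 3 : ℝ) • (1 : Mat3))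

def sStar (a b c : ℝ) : ℝ := (b + Real.sqrt (b ^ 2 + 24 * a * c)) / (4 * c)

def fLdG (a b c C : ℝ) (Q : Mat3) : ℝ :=
  C - a / 2 * (Q * Q).trace - b / 3 * (Q * Q * Q).trace + c / 4 * ((Q * Q).trace) ^ 2

def gMagE (sS : ℝ) (A : E9) : ℝ := 2 / 3 * sS - A (2, 2)

def NsetE (s : ℝ) : Set E9 := {A | ∃ n, unitVec n ∧ toM A = uniax s n}

def IsEigen (Q : Mat3) (μ : ℝ) (v : Fin 3 → ℝ) : Prop := Q.mulVec v = μ • v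

def MaxEigen (Q : Mat3) (lam : ℝ) (n : Fin 3 → ℝ) : Prop :=
  unitVec n ∧ IsEigen Q lam n ∧
    ∀ (μ : ℝ) (v : Fin 3 → ℝ), v ≠ 0 → IsEigen Q μ v → μ ≤ lam

def SimpleMaxEigen (Q : Mat3) (lam : ℝ) (n : Fin 3 → ℝ) : Prop :=
  MaxEigen Q lam n ∧ ∀ v : Fin 3 → ℝ, IsEigen Q lam v → ∃ t : ℝ, v = t • n

def TsetE : Set E9 :=
  {A | A ∈ Sym0E ∧ A ≠ 0 ∧ ∃ (lam : ℝ) (n : Fin 3 → ℝ), SimpleMaxEigen (toM A) lam n ∧ n 2 = 0}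

/-- C₀(ξ,η) = −min over Sym₀ of (1/ξ²)f + (1/η²)g. -/
def C0const (a b c C ξ η : ℝ) : ℝ :=
  -sInf {v | ∃ P ∈ Sym0E,
    v = 1 / ξ ^ 2 * fLdG a b c C (toM P) + 1 / η ^ 2 * gMagE (sStar a b c) P}

/-- Pointwise energy density (1/2)|∇Q|² + (1/ξ²)f(Q) + (1/η²)g(Q) + C₀,
with |∇Q|² = ∑ᵢ |∂ᵢQ|² computed via `fderivWithin` on Ω. -/
def density (a b c C ξ η : ℝ) (Ω : Set V3) (Q : V3 → E9) (x : V3) : ℝ :=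
  1 / 2 * ∑ i : Fin 3, ‖fderivWithin ℝ Q Ω x (EuclideanSpace.single i (1 : ℝ))‖ ^ 2 +
    1 / ξ ^ 2 * fLdG a b c C (toM (Q x)) + 1 / η ^ 2 * gMagE (sStar a b c) (Q x) +
    C0const a b c C ξ η

lemma e9_norm_le {A : E9} {M : ℝ} (hM : 0 ≤ M) (h : ∀ p, |A p| ≤ M) : ‖A‖ ≤ 3 * M := by
  rw [EuclideanSpace.norm_eq]
  apply Real.sqrt_le_iff.2
  refine ⟨by positivity, ?_⟩
  calc ∑ i, ‖A i‖ ^ 2 ≤ ∑ i : Fin 3 × Fin 3, M ^ 2 := by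
        apply Finset.sum_le_sum
        intro i _
        rw [Real.norm_eq_abs]
        have := h i
        gcongr
    _ = (3 * M) ^ 2 := by
        simp
        ring

lemma e9_entry_le (A : E9) (p) : |A p| ≤ ‖A‖ := by
  have := PiLp.norm_apply_le A p
  simpa using this

def Psi (c s : ℝ) (w : Fin 5 → ℝ) : E9 := WithLp.toLp 2 fun p =>
  w 0 * (![c, s, 0] p.1 * ![c, s, 0] p.2) + w 1 * (![-s, c, 0] p.1 * ![-s, c, 0] p.2)
  + (- w 0 - w 1) * (![0, 0, 1] p.1 * ![0, 0, 1] p.2)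
  + w 2 * (![-s, c, 0] p.1 * ![0, 0, 1] p.2 + ![0, 0, 1] p.1 * ![-s, c, 0] p.2)
  + w 3 * (![c, s, 0] p.1 * ![-s, c, 0] p.2 + ![-s, c, 0] p.1 * ![c, s, 0] p.2)
  + w 4 * (![c, s, 0] p.1 * ![0, 0, 1] p.2 + ![0, 0, 1] p.1 * ![c, s, 0] p.2)

lemma Psi_sub (c s : ℝ) (v w : Fin 5 → ℝ) : Psi c s v - Psi c s w = Psi c s (v - w) := by
  ext p
  simp only [Psi, PiLp.sub_apply, Pi.sub_apply]
  ring

lemma abs_mul_le_of {w x M : ℝ} {k : ℝ} (hw : |w| ≤ M) (hx : |x| ≤ k) : |w * x| ≤ k * M := by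
  rw [abs_mul, mul_comm]
  exact mul_le_mul hx hw (abs_nonneg _) (le_trans (abs_nonneg _) hx)

lemma vec_le1 {x y z : ℝ} (hx : |x| ≤ 1) (hy : |y| ≤ 1) (hz : |z| ≤ 1) (i : Fin 3) :
    |(![x, y, z] : Fin 3 → ℝ) i| ≤ 1 := by
  fin_cases i <;> simpa

lemma Psi_norm (c s : ℝ) (hc : |c| ≤ 1) (hs : |s| ≤ 1) (w : Fin 5 → ℝ) :
    ‖Psi c s w‖ ≤ 30 * ‖w‖ := by
  have hw : ∀ i, |w i| ≤ ‖w‖ := fun i => norm_le_pi_norm w i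
  have : (30 : ℝ) * ‖w‖ = 3 * (10 * ‖w‖) := by ring
  rw [this]
  apply e9_norm_le (by positivity)
  intro p
  have hn := vec_le1 hc hs (z := 0) (by simp)
  have hm := vec_le1 (x := -s) (by simpa) hc (z := 0) (by simp)
  have hz := vec_le1 (x := 0) (y := 0) (z := 1) (by simp) (by simp) (by simp)
  have two : ∀ {x y : ℝ}, |x| ≤ 1 → |y| ≤ 1 → |x * y| ≤ 1 := by
    intro x y hx hy
    have := abs_mul_le_of hx hy
    linarith
  have sum2 : ∀ {x y : ℝ}, |x| ≤ 1 → |y| ≤ 1 → |x + y| ≤ 2 := by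
    intro x y hx hy
    have := abs_add_le x y
    linarith
  simp only [Psi]
  have h0 := abs_mul_le_of (hw 0) (two (hn p.1) (hn p.2))
  have h1 := abs_mul_le_of (hw 1) (two (hm p.1) (hm p.2))
  have h01 : |-w 0 - w 1| ≤ 2 * ‖w‖ := by
    have a0 := abs_le.1 (hw 0)
    have a1 := abs_le.1 (hw 1)
    rw [abs_le]
    constructor <;> linarith
  have h2 := abs_mul_le_of h01 (two (hz p.1) (hz p.2))
  have h3 := abs_mul_le_of (hw 2) (sum2 (two (hm p.1) (hz p.2)) (two (hz p.1) (hm p.2)))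
  have h4 := abs_mul_le_of (hw 3) (sum2 (two (hn p.1) (hm p.2)) (two (hm p.1) (hn p.2)))
  have h5 := abs_mul_le_of (hw 4) (sum2 (two (hn p.1) (hz p.2)) (two (hz p.1) (hn p.2)))
  rw [abs_le] at *
  constructor <;> linarith [h0.1, h0.2]

lemma Psi_lip (c s : ℝ) (hc : |c| ≤ 1) (hs : |s| ≤ 1) (P : E9) :
    LipschitzWith 30 (fun w => P - Psi c s w) := by
  apply LipschitzWith.of_dist_le_mul
  intro v w
  rw [dist_eq_norm, dist_eq_norm, sub_sub_sub_cancel_left, Psi_sub, ← norm_neg (v - w), neg_sub]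
  exact Psi_norm c s hc hs _

def coordW (c s : ℝ) (B : E9) : Fin 5 → ℝ :=
  ![c * (c * B (0,0) + s * B (0,1)) + s * (c * B (1,0) + s * B (1,1)),
    -s * (-s * B (0,0) + c * B (0,1)) + c * (-s * B (1,0) + c * B (1,1)),
    -s * B (2,0) + c * B (2,1),
    c * (-s * B (0,0) + c * B (0,1)) + s * (-s * B (1,0) + c * B (1,1)),
    c * B (2,0) + s * B (2,1)]

lemma sym0_facts {B : E9} (hB : B ∈ Sym0E) : (∀ i j, B (i, j) = B (j, i)) ∧
    (B (0,0) : ℝ) + (B (1,1) : ℝ) + (B (2,2) : ℝ) = (0 : ℝ) := by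
  obtain ⟨h1, h2⟩ := hB
  constructor
  · intro i j
    exact h1.apply j i
  · rw [Matrix.trace_fin_three] at h2
    exact h2

lemma Psi_coord (c s : ℝ) (h : c ^ 2 + s ^ 2 = 1) (B : E9) (hB : B ∈ Sym0E) :
    Psi c s (coordW c s B) = B := by
  obtain ⟨hs, ht⟩ := sym0_facts hB
  have h01 := hs 0 1
  have h02 := hs 0 2
  have h12 := hs 1 2
  ext ⟨i, j⟩
  fin_cases i <;> fin_cases j <;> simp [Psi, coordW] <;>
    first | grind | linear_combination -(B (0,0) + B (1,1)) * h - ht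

lemma slab_count {r : ℝ} (hr : 0 < r) {c s : ℝ} (h : c ^ 2 + s ^ 2 = 1) :
    ∃ j ∈ Finset.Icc (-⌈4 / r⌉) ⌈4 / r⌉, |c - Real.cos (j * r)| ≤ r ∧ |s - Real.sin (j * r)| ≤ r := by
  set θ := Complex.arg ⟨c, s⟩ with hθ
  have hn : ‖(⟨c, s⟩ : ℂ)‖ = 1 := by
    rw [Complex.norm_eq_sqrt_sq_add_sq]
    simp [h]
  have hc : c = Real.cos θ := by
    have := Complex.norm_mul_cos_arg ⟨c, s⟩
    rw [hn] at this
    simpa using this.symm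
  have hs : s = Real.sin θ := by
    have := Complex.norm_mul_sin_arg ⟨c, s⟩
    rw [hn] at this
    simpa using this.symm
  have b1 := Complex.neg_pi_lt_arg ⟨c, s⟩
  have b2 := Complex.arg_le_pi ⟨c, s⟩
  rw [← hθ] at b1 b2
  have hpi := Real.pi_le_four
  have fl := Int.floor_le (θ / r)
  have fl2 := Int.lt_floor_add_one (θ / r)
  have hce := Int.le_ceil (4 / r)
  rw [le_div_iff₀ hr] at fl
  rw [div_lt_iff₀ hr] at fl2
  have hd : |θ - ⌊θ / r⌋ * r| ≤ r := by
    rw [abs_le]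
    constructor <;> linarith
  refine ⟨⌊θ / r⌋, ?_, ?_, ?_⟩
  · rw [Finset.mem_Icc]
    constructor
    · rw [Int.le_floor]
      push_cast
      have : -(4 / r) ≤ θ / r := by
        rw [← neg_div]
        gcongr
        linarith
      linarith
    · have : (⌊θ / r⌋ : ℝ) ≤ ⌈4 / r⌉ := by
        have h1 : θ / r ≤ 4 / r := by
          gcongr
          linarith
        linarith [Int.floor_le (θ / r)]
      exact_mod_cast this
  · rw [hc]
    exact (Real.abs_cos_sub_cos_le _ _).trans hd
  · rw [hs]
    exact (Real.abs_sin_sub_sin_le _ _).trans hd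

def Slab (c s D r M : ℝ) : Set (Fin 5 → ℝ) :=
  Set.Icc (fun i => -(![4 * M, 4 * M, 4 * M, D * r, D * r] : Fin 5 → ℝ) i)
    (![4 * M, 4 * M, 4 * M, D * r, D * r] : Fin 5 → ℝ)

lemma slab_vol (c s D r M : ℝ) (hD : 0 ≤ D) (hr : 0 ≤ r) (hM : 0 ≤ M) :
    (μH[5] : Measure (Fin 5 → ℝ)) (Slab c s D r M) =
      ENNReal.ofReal ((8 * M) ^ 3 * (2 * D * r) ^ 2) := by
  have h5 : (5 : ℝ) = ((Fintype.card (Fin 5) : ℕ) : ℝ) := by simp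
  rw [h5, hausdorffMeasure_pi_real, Slab, Real.volume_Icc_pi, ← ENNReal.ofReal_prod_of_nonneg]
  · congr 1
    simp [Fin.prod_univ_succ]
    ring
  · intro i _
    fin_cases i <;> simp <;> positivity

lemma T_facts {A : E9} (hA : A ∈ TsetE) : ∃ c s : ℝ, c ^ 2 + s ^ 2 = 1 ∧
    (c * (-s * A (0,0) + c * A (0,1)) + s * (-s * A (1,0) + c * A (1,1)) = 0) ∧
    c * A (2,0) + s * A (2,1) = 0 := by
  obtain ⟨hS, -, lam, n, ⟨⟨hu, he, -⟩, -⟩, hn⟩ := hA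
  obtain ⟨hs, ht⟩ := sym0_facts hS
  refine ⟨n 0, n 1, ?_, ?_, ?_⟩
  · simpa [unitVec, Fin.sum_univ_three, hn] using hu
  all_goals
    have e0 := congrFun he 0
    have e1 := congrFun he 1
    have e2 := congrFun he 2
    simp [toM, Matrix.mulVec, dotProduct, Fin.sum_univ_three, hn] at e0 e1 e2
    have h01 := hs 0 1
  · linear_combination n 0 * e1 - n 1 * e0 + (n 0 ^ 2 + n 1 ^2) * h01
  · linear_combination e2

lemma abs_le_add_of {x y z : ℝ} (h : |x - y| ≤ z) : |x| ≤ |y| + z := by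
  have := abs_sub_abs_le_abs_sub x y
  linarith

lemma T_near {r R : ℝ} (hr : 0 < r) (hr1 : r ≤ 1) (hR : 0 < R) {A B : E9} (hA : A ∈ TsetE)
    (hAR : ‖A‖ ≤ R) (hB : B ∈ Sym0E) (hAB : ‖B - A‖ ≤ r) :
    ∃ j ∈ Finset.Icc (-⌈4 / r⌉) ⌈4 / r⌉,
      coordW (Real.cos (j * r)) (Real.sin (j * r)) B ∈
        Slab (Real.cos (j * r)) (Real.sin (j * r)) (4 + 8 * R) r (R + 1) := by
  obtain ⟨c, s, hcs, h3, h4⟩ := T_facts hA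
  obtain ⟨j, hj, hc, hs⟩ := slab_count hr hcs
  refine ⟨j, hj, ?_⟩
  have c1 := Real.abs_cos_le_one (j * r)
  have s1 := Real.abs_sin_le_one (j * r)
  set c' := Real.cos (j * r)
  set s' := Real.sin (j * r)
  have c0 : |c| ≤ 1 := by
    rw [abs_le]
    constructor <;> nlinarith
  have s0 : |s| ≤ 1 := by
    rw [abs_le]
    constructor <;> nlinarith
  have hE : ∀ p, |B p - A p| ≤ r := fun p => (e9_entry_le (B - A) p).trans hAB
  have hAe : ∀ p, |A p| ≤ R := fun p => (e9_entry_le A p).trans hAR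
  have hBe : ∀ p, |B p| ≤ R + 1 := fun p => by
    have := abs_le_add_of (hE p)
    linarith [hAe p]
  -- products of three
  have p2 : ∀ {x y z M : ℝ}, |x| ≤ 1 → |y| ≤ 1 → |z| ≤ M → |x * y * z| ≤ M := by
    intro x y z M hx hy hz
    have h1 := abs_mul_le_of hx hy
    have h1' : |x * y| ≤ 1 := by linarith
    have := abs_mul_le_of hz h1'
    rw [mul_comm z] at this
    linarith
  have p1 : ∀ {x z M : ℝ}, |x| ≤ 1 → |z| ≤ M → |x * z| ≤ M := by
    intro x z M hx hz
    have := abs_mul_le_of hz hx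
    rw [mul_comm z] at this
    linarith
  have dd : ∀ {x y x' y' : ℝ}, |x| ≤ 1 → |y'| ≤ 1 → |x - x'| ≤ r → |y - y'| ≤ r →
      ∀ p, |(x' * y' - x * y) * A p| ≤ 2 * r * R := by
    intro x y x' y' hx hy hxx hyy p
    have h1 := p1 hx hyy
    have h2 := p1 hy hxx
    have h3 : |x' * y' - x * y| ≤ 2 * r := by
      rw [abs_le] at h1 h2 ⊢
      constructor <;> linarith
    have := abs_mul_le_of h3 (hAe p)
    linarith
  have d1 : ∀ {x x' : ℝ}, |x - x'| ≤ r → ∀ p, |(x' - x) * A p| ≤ r * R := by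
    intro x x' hxx p
    rw [abs_sub_comm] at hxx
    have := abs_mul_le_of hxx (hAe p)
    linarith
  have b0 : |c' * (c' * B (0,0) + s' * B (0,1)) + s' * (c' * B (1,0) + s' * B (1,1))|
      ≤ 4 * (R + 1) := by
    have q1 := p2 c1 c1 (hBe (0,0))
    have q2 := p2 c1 s1 (hBe (0,1))
    have q3 := p2 s1 c1 (hBe (1,0))
    have q4 := p2 s1 s1 (hBe (1,1))
    rw [abs_le] at q1 q2 q3 q4 ⊢
    constructor <;> linarith
  have b1 : |-s' * (-s' * B (0,0) + c' * B (0,1)) + c' * (-s' * B (1,0) + c' * B (1,1))|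
      ≤ 4 * (R + 1) := by
    have q1 := p2 s1 s1 (hBe (0,0))
    have q2 := p2 s1 c1 (hBe (0,1))
    have q3 := p2 c1 s1 (hBe (1,0))
    have q4 := p2 c1 c1 (hBe (1,1))
    rw [abs_le] at q1 q2 q3 q4 ⊢
    constructor <;> linarith
  have b2 : |-s' * B (2,0) + c' * B (2,1)| ≤ 4 * (R + 1) := by
    have q1 := p1 s1 (hBe (2,0))
    have q2 := p1 c1 (hBe (2,1))
    rw [abs_le] at q1 q2 ⊢
    constructor <;> linarith
  have b3 : |c' * (-s' * B (0,0) + c' * B (0,1)) + s' * (-s' * B (1,0) + c' * B (1,1))|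
      ≤ (4 + 8 * R) * r := by
    have q1 := p2 c1 s1 (hE (0,0))
    have q2 := p2 c1 c1 (hE (0,1))
    have q3 := p2 s1 s1 (hE (1,0))
    have q4 := p2 s1 c1 (hE (1,1))
    have r1 := dd c0 s1 hc hs (0,0)
    have r2 := dd c0 c1 hc hc (0,1)
    have r3 := dd s0 s1 hs hs (1,0)
    have r4 := dd s0 c1 hs hc (1,1)
    rw [abs_le] at q1 q2 q3 q4 r1 r2 r3 r4 ⊢
    constructor <;> linarith
  have b4 : |c' * B (2,0) + s' * B (2,1)| ≤ (4 + 8 * R) * r := by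
    have q1 := p1 c1 (hE (2,0))
    have q2 := p1 s1 (hE (2,1))
    have r1 := d1 hc (2,0)
    have r2 := d1 hs (2,1)
    have : 0 ≤ r * R := by positivity
    rw [abs_le] at q1 q2 r1 r2 ⊢
    constructor <;> linarith
  rw [abs_le] at b0 b1 b2 b3 b4
  constructor
  · intro i
    fin_cases i
    · exact b0.1
    · exact b1.1
    · exact b2.1
    · exact b3.1
    · exact b4.1
  · intro i
    fin_cases i
    · exact b0.2
    · exact b1.2
    · exact b2.2
    · exact b3.2
    · exact b4.2

lemma sym0_sub {A B : E9} (hA : A ∈ Sym0E) (hB : B ∈ Sym0E) : A - B ∈ Sym0E := by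
  have : toM (A - B) = toM A - toM B := by
    ext i j
    simp [toM]
  constructor
  · rw [this]
    exact hA.1.sub hB.1
  · rw [this, Matrix.trace_sub, hA.2, hB.2, sub_zero]

lemma T_nbhd (R : ℝ) (hR : 0 < R) : ∃ K > (0 : ℝ), ∀ r : ℝ, 0 < r → r ≤ 1 → ∀ P ∈ Sym0E,
    (μH[5] : Measure E9) {Y | Y ∈ Sym0E ∧ ∃ A ∈ TsetE, ‖A‖ ≤ R ∧ ‖(P - Y) - A‖ ≤ r} ≤
      ENNReal.ofReal (K * r) := by
  refine ⟨11 * (30 ^ 5 * ((8 * (R + 1)) ^ 3 * (2 * (4 + 8 * R)) ^ 2)), by positivity, ?_⟩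
  intro r hr hr1 P hP
  set V := (8 * (R + 1)) ^ 3 * (2 * (4 + 8 * R) * r) ^ 2 with hV
  have hsub : {Y | Y ∈ Sym0E ∧ ∃ A ∈ TsetE, ‖A‖ ≤ R ∧ ‖(P - Y) - A‖ ≤ r} ⊆
      ⋃ j ∈ Finset.Icc (-⌈4 / r⌉) ⌈4 / r⌉,
        (fun w => P - Psi (Real.cos (j * r)) (Real.sin (j * r)) w) ''
          Slab (Real.cos (j * r)) (Real.sin (j * r)) (4 + 8 * R) r (R + 1) := by
    rintro Y ⟨hY, A, hA, hAR, hr'⟩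
    obtain ⟨j, hj, h⟩ := T_near hr hr1 hR hA hAR (sym0_sub hP hY) hr'
    simp only [Set.mem_iUnion]
    refine ⟨j, hj, _, h, ?_⟩
    simp only
    rw [Psi_coord _ _ (Real.cos_sq_add_sin_sq _) _ (sym0_sub hP hY), sub_sub_cancel]
  have hVn : 0 ≤ V := by positivity
  calc _ ≤ _ := measure_mono hsub
    _ ≤ ∑ j ∈ Finset.Icc (-⌈4 / r⌉) ⌈4 / r⌉, ENNReal.ofReal (30 ^ 5 * V) := by
        refine (measure_biUnion_finset_le _ _).trans (Finset.sum_le_sum fun j _ => ?_)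
        refine ((Psi_lip _ _ (Real.abs_cos_le_one _) (Real.abs_sin_le_one _) P).hausdorffMeasure_image_le
          (by norm_num) _).trans ?_
        rw [slab_vol _ _ _ _ _ (by positivity) hr.le (by positivity),
          show ENNReal.ofReal (30 ^ 5 * V) = ENNReal.ofReal (30 ^ 5) * ENNReal.ofReal V from
            ENNReal.ofReal_mul (by positivity)]
        gcongr
        have : (5 : ℝ) = ((5 : ℕ) : ℝ) := by norm_num
        rw [this, ENNReal.rpow_natCast, ENNReal.ofReal_pow (by norm_num)]
        simp
    _ ≤ _ := by
        rw [Finset.sum_const, nsmul_eq_mul, ← ENNReal.ofReal_natCast, ← ENNReal.ofReal_mul (by positivity)]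
        apply ENNReal.ofReal_le_ofReal
        have hc0 : 0 ≤ ⌈4 / r⌉ := Int.ceil_nonneg (by positivity)
        have hcard : ((Finset.Icc (-⌈4 / r⌉) ⌈4 / r⌉).card : ℝ) ≤ 11 / r := by
          rw [Int.card_Icc]
          have h1 : (((⌈4 / r⌉ + 1 - -⌈4 / r⌉).toNat : ℤ) : ℝ) = 2 * ⌈4 / r⌉ + 1 := by
            rw [Int.toNat_of_nonneg (by omega)]
            push_cast
            ring
          have h2 := Int.ceil_lt_add_one (4 / r)
          have h3 : (((⌈4 / r⌉ + 1 - -⌈4 / r⌉).toNat : ℕ) : ℝ) = 2 * ⌈4 / r⌉ + 1 := by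
            rw [← h1]
            norm_cast
          rw [h3]
          have h4 : 1 ≤ 1 / r := by
            rw [le_div_iff₀ hr]
            linarith
          have h5 : 4 / r = 4 * (1 / r) := by ring
          have h6 : 11 / r = 11 * (1 / r) := by ring
          rw [h6]
          rw [h5] at h2 ⊢
          linarith
        calc _ ≤ 11 / r * (30 ^ 5 * V) := by gcongr
          _ = _ := by
            rw [hV]
            field_simp

lemma rayleigh {Q : Mat3} (hQ : Q.IsSymm) {lam : ℝ} {n : Fin 3 → ℝ} (h : MaxEigen Q lam n)
    (v : Fin 3 → ℝ) (hv : unitVec v) : v ⬝ᵥ Q.mulVec v ≤ lam := by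
  have hB : (lam • (1 : Mat3) - Q).IsHermitian := by
    rw [Matrix.IsHermitian, Matrix.conjTranspose_eq_transpose_of_trivial]
    simp [hQ.eq]
  have hps : (lam • (1 : Mat3) - Q).PosSemidef := by
    rw [hB.posSemidef_iff_eigenvalues_nonneg]
    intro i
    have h1 := hB.mulVec_eigenvectorBasis i
    have hne : (⇑(hB.eigenvectorBasis i) : Fin 3 → ℝ) ≠ 0 := by
      intro h0
      have := hB.eigenvectorBasis.orthonormal.ne_zero i
      apply this
      ext k
      exact congrFun h0 k
    have h2 := h.2.2 (lam - hB.eigenvalues i) _ hne (by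
      rw [IsEigen, sub_smul, ← h1, Matrix.sub_mulVec, Matrix.smul_mulVec, Matrix.one_mulVec]
      simp)
    simp only [Pi.zero_apply]
    linarith
  have := hps.dotProduct_mulVec_nonneg v
  rw [Matrix.sub_mulVec, Matrix.smul_mulVec, Matrix.one_mulVec, dotProduct_sub, dotProduct_smul] at this
  simp only [star_trivial] at this
  have hvv : v ⬝ᵥ v = 1 := by
    rw [← hv]
    simp [dotProduct, sq]
  rw [hvv] at this
  simp at this
  exact this

lemma quad_le (A : E9) (v : Fin 3 → ℝ) (hv : unitVec v) : |v ⬝ᵥ (toM A).mulVec v| ≤ ‖A‖ := by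
  have hcs := Finset.sum_mul_sq_le_sq_mul_sq (Finset.univ : Finset (Fin 3 × Fin 3))
    (fun p => v p.1 * v p.2) (fun p => A p)
  have e1 : ∑ p : Fin 3 × Fin 3, (v p.1 * v p.2) ^ 2 = 1 := by
    rw [Fintype.sum_prod_type]
    simp only [mul_pow, ← Finset.mul_sum]
    rw [unitVec] at hv
    rw [hv]
    simp [hv]
  have e2 : ∑ p : Fin 3 × Fin 3, A p ^ 2 = ‖A‖ ^ 2 := by
    rw [EuclideanSpace.norm_sq_eq]
    simp
  have e3 : ∑ p : Fin 3 × Fin 3, (v p.1 * v p.2) * A p = v ⬝ᵥ (toM A).mulVec v := by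
    rw [Fintype.sum_prod_type]
    simp only [dotProduct, Matrix.mulVec, toM, Finset.mul_sum, Matrix.of_apply]
    refine Finset.sum_congr rfl fun i _ => Finset.sum_congr rfl fun j _ => ?_
    ring
  rw [e1, e2, e3, one_mul] at hcs
  exact abs_le_of_sq_le_sq hcs (norm_nonneg _)

lemma toM_sub (A B : E9) : toM (A - B) = toM A - toM B := by
  ext i j
  simp [toM]

lemma uniax_quad (s : ℝ) (n v : Fin 3 → ℝ) (hv : unitVec v) :
    v ⬝ᵥ (uniax s n).mulVec v = s * (n ⬝ᵥ v) ^ 2 - s / 3 := by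
  rw [unitVec, Fin.sum_univ_three] at hv
  simp [uniax, dotProduct, Matrix.mulVec, Fin.sum_univ_three, Matrix.vecMulVec, Matrix.one_apply]
  linear_combination (-s / 3) * hv

lemma near_T {s δ α : ℝ} (hs : 0 < s) (hsm : 2 * (δ + α) + δ < 2 * s / 3)
    {Q U Y : E9} {n : Fin 3 → ℝ} (hn : unitVec n)
    (hU : toM U = uniax s n) (hQU : ‖Q - U‖ < δ) (hY : ‖Y‖ < α) (hT : Q - Y ∈ TsetE) :
    Q (2, 2) < s / 3 := by
  obtain ⟨hS, -, lam, n', ⟨hmax, -⟩, hn2⟩ := hT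
  have hle := rayleigh hS.1 hmax n hn
  have hn' := hmax.1
  have hlam : n' ⬝ᵥ (toM (Q - Y)).mulVec n' = lam := by
    have : (toM (Q - Y)).mulVec n' = lam • n' := hmax.2.1
    rw [this, dotProduct_smul]
    have : n' ⬝ᵥ n' = 1 := by
      rw [← hn']
      simp [dotProduct, sq]
    simp [this]
  have hdec : toM (Q - Y) = uniax s n + toM (Q - U - Y) := by
    rw [← hU]
    simp only [toM_sub]
    abel
  have hnorm : ‖Q - U - Y‖ ≤ δ + α := (norm_sub_le _ _).trans (by linarith)
  have q1 := (abs_le.1 ((quad_le (Q - U - Y) n hn).trans hnorm)).1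
  have q2 := (abs_le.1 ((quad_le (Q - U - Y) n' hn').trans hnorm)).2
  rw [hdec, Matrix.add_mulVec, dotProduct_add, uniax_quad s n _ hn] at hle
  rw [hdec, Matrix.add_mulVec, dotProduct_add, uniax_quad s n _ hn'] at hlam
  have hnn : n ⬝ᵥ n = 1 := by
    rw [← hn]
    simp [dotProduct, sq]
  rw [hnn] at hle
  have hQ22 : Q (2, 2) ≤ s * n 2 ^ 2 - s / 3 + δ := by
    have h1 := (abs_le.1 ((e9_entry_le (Q - U) (2, 2)).trans hQU.le)).2
    have h2 : U (2, 2) = s * n 2 ^ 2 - s / 3 := by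
      have := congrFun (congrFun hU 2) 2
      simp [toM, uniax, Matrix.vecMulVec] at this
      rw [this]
      ring
    simp only [PiLp.sub_apply] at h1
    linarith
  have hcs : n 2 ^ 2 + (n ⬝ᵥ n') ^ 2 ≤ 1 := by
    simp only [unitVec, Fin.sum_univ_three, hn2] at hn hn'
    simp only [dotProduct, Fin.sum_univ_three, hn2]
    have h1 : n' 0 ^ 2 + n' 1 ^ 2 = 1 := by linarith
    nlinarith [sq_nonneg (n 0 * n' 1 - n 1 * n' 0)]
  have := mul_le_mul_of_nonneg_left hcs hs.le
  linarith

lemma f_conj (a b c C : ℝ) (Q H : Mat3) (hH : H * H = 1) :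
    fLdG a b c C (H * Q * H) = fLdG a b c C Q := by
  have h2 : (H * Q * H) * (H * Q * H) = H * (Q * Q) * H := by
    calc _ = H * Q * (H * H) * Q * H := by simp only [mul_assoc]
      _ = _ := by rw [hH]; simp only [mul_assoc, mul_one]
  have h3 : H * (Q * Q) * H * (H * Q * H) = H * (Q * Q * Q) * H := by
    calc _ = H * (Q * Q) * (H * H) * Q * H := by simp only [mul_assoc]
      _ = _ := by rw [hH]; simp only [mul_assoc, mul_one]
  have ht : ∀ X : Mat3, (H * X * H).trace = X.trace := by
    intro X
    rw [Matrix.trace_mul_comm, ← mul_assoc, hH, one_mul]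
  rw [fLdG, fLdG, h2, h3, ht, ht]

lemma exists_refl (n : Fin 3 → ℝ) (hn : unitVec n) : ∃ H : Mat3, H * H = 1 ∧ H.IsSymm ∧
    ∀ i, H i 2 = n i := by
  by_cases h1 : n 2 = 1
  · rw [unitVec, Fin.sum_univ_three, h1] at hn
    have h0 : n 0 = 0 := by nlinarith
    have h1' : n 1 = 0 := by nlinarith
    refine ⟨1, by simp, by simp, ?_⟩
    intro i
    fin_cases i
    · simp [h0]
    · simp [h1']
    · change (1 : Mat3) 2 2 = n 2
      simp [h1]
  · have h2 : 1 - n 2 ≠ 0 := fun h => h1 (by linarith)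
    rw [unitVec, Fin.sum_univ_three] at hn
    set w : Fin 3 → ℝ := ![n 0, n 1, n 2 - 1] with hw
    have hww : w ⬝ᵥ w = 2 * (1 - n 2) := by
      simp [hw, dotProduct, Fin.sum_univ_three]
      linear_combination hn
    refine ⟨1 - (1 / (1 - n 2)) • Matrix.vecMulVec w w, ?_, ?_, ?_⟩
    · have : Matrix.vecMulVec w w * Matrix.vecMulVec w w = (2 * (1 - n 2)) • Matrix.vecMulVec w w := by
        rw [Matrix.vecMulVec_mul_vecMulVec, hww]
        ext i j
        simp [Matrix.vecMulVec]
        ring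
      rw [sub_mul, mul_sub, mul_sub, smul_mul_smul_comm, this, smul_smul]
      simp only [one_mul, mul_one]
      have e : 1 / (1 - n 2) * (1 / (1 - n 2)) * (2 * (1 - n 2)) = 1 / (1 - n 2) + 1 / (1 - n 2) := by
        field_simp
        ring
      rw [e, add_smul]
      abel
    · rw [Matrix.IsSymm]
      ext i j
      simp [Matrix.vecMulVec, Matrix.one_apply, mul_comm, eq_comm]
    · intro i
      fin_cases i <;> simp [Matrix.vecMulVec, hw, Matrix.one_apply] <;> field_simp <;> ring

lemma competitor (a b c C : ℝ) {s δ : ℝ} {Q U : E9} (hQ : Q ∈ Sym0E) {n : Fin 3 → ℝ} (hn : unitVec n)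
    (hU : toM U = uniax s n) (hQU : ‖Q - U‖ < δ) :
    ∃ P ∈ Sym0E, fLdG a b c C (toM P) = fLdG a b c C (toM Q) ∧ 2 * s / 3 - δ ≤ P (2, 2) := by
  obtain ⟨H, hH, hHs, hHn⟩ := exists_refl n hn
  set P : E9 := WithLp.toLp 2 fun p => (H * toM Q * H) p.1 p.2 with hP
  have hPM : toM P = H * toM Q * H := by
    ext i j
    simp [toM, hP]
  refine ⟨P, ⟨?_, ?_⟩, ?_, ?_⟩
  · rw [hPM, Matrix.IsSymm, Matrix.transpose_mul, Matrix.transpose_mul, hHs.eq, hQ.1.eq, mul_assoc]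
  · rw [hPM, Matrix.trace_mul_comm, ← mul_assoc, hH, one_mul, hQ.2]
  · rw [hPM, f_conj _ _ _ _ _ _ hH]
  · have h22 : P (2, 2) = n ⬝ᵥ (toM Q).mulVec n := by
      have hr : ∀ j, H 2 j = n j := fun j => by rw [← hHn j, hHs.apply]
      change (H * toM Q * H) 2 2 = _
      simp only [Matrix.mul_apply, Fin.sum_univ_three, hr, hHn, dotProduct, Matrix.mulVec]
      ring
    have hdec : toM Q = uniax s n + toM (Q - U) := by
      rw [← hU, toM_sub]
      abel
    have q := (abs_le.1 ((quad_le (Q - U) n hn).trans hQU.le)).1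
    have hnn : n ⬝ᵥ n = 1 := by
      rw [← hn]
      simp [dotProduct, sq]
    rw [h22, hdec, Matrix.add_mulVec, dotProduct_add, uniax_quad _ _ _ hn, hnn]
    linarith

lemma poly_bdd (D c : ℝ) (hD : 0 ≤ D) (hc : 0 < c) : ∃ M : ℝ, ∀ t : ℝ, 0 ≤ t →
    M ≤ c * t ^ 4 - D * (t + t ^ 2 + t ^ 3) := by
  refine ⟨-(D * ((1 + 3 * D / c) + (1 + 3 * D / c) ^ 2 + (1 + 3 * D / c) ^ 3)), ?_⟩
  intro t ht
  set T := 1 + 3 * D / c with hT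
  have hT1 : 1 ≤ T := by
    have : 0 ≤ 3 * D / c := by positivity
    linarith
  by_cases h : t ≤ T
  · have h2 : t ^ 2 ≤ T ^ 2 := by gcongr
    have h3 : t ^ 3 ≤ T ^ 3 := by gcongr
    have : D * (t + t ^ 2 + t ^ 3) ≤ D * (T + T ^ 2 + T ^ 3) := by gcongr
    have : 0 ≤ c * t ^ 4 := by positivity
    linarith
  · push Not at h
    have t1 : 1 ≤ t := by linarith
    have h1 : t + t ^ 2 + t ^ 3 ≤ 3 * t ^ 3 := by
      have : t ≤ t ^ 3 := le_self_pow₀ t1 (by norm_num)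
      have : t ^ 2 ≤ t ^ 3 := pow_le_pow_right₀ t1 (by norm_num)
      linarith
    have h2 : 3 * D ≤ c * t := by
      have : 3 * D / c ≤ t := by linarith
      rw [div_le_iff₀ hc] at this
      linarith
    have h3 := mul_le_mul_of_nonneg_left h1 hD
    have h4 := mul_le_mul_of_nonneg_right h2 (pow_nonneg ht 3)
    have : 0 ≤ D * (T + T ^ 2 + T ^ 3) := by positivity
    nlinarith

lemma f_lower (a b c C : ℝ) (ha : 0 < a) (hb : 0 < b) (P : E9) (hP : P ∈ Sym0E) :
    C - a / 2 * ‖P‖ ^ 2 - 9 * b * ‖P‖ ^ 3 + c / 4 * ‖P‖ ^ 4 ≤ fLdG a b c C (toM P) := by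
  have h2 : (toM P * toM P).trace = ‖P‖ ^ 2 := by
    rw [EuclideanSpace.norm_sq_eq, Fintype.sum_prod_type, Matrix.trace]
    refine Finset.sum_congr rfl fun i _ => ?_
    rw [Matrix.diag_apply, Matrix.mul_apply]
    refine Finset.sum_congr rfl fun j _ => ?_
    have := (sym0_facts hP).1 i j
    simp only [toM, Matrix.of_apply, Real.norm_eq_abs, sq_abs]
    rw [← this, sq]
  have h3 : (toM P * toM P * toM P).trace ≤ 27 * ‖P‖ ^ 3 := by
    have hb : ∀ i j k : Fin 3, P (i, j) * P (j, k) * P (k, i) ≤ ‖P‖ ^ 3 := by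
      intro i j k
      refine (le_abs_self _).trans ?_
      rw [abs_mul, abs_mul, pow_succ, pow_two]
      gcongr <;> exact e9_entry_le P _
    have : (toM P * toM P * toM P).trace = ∑ i, ∑ k, ∑ j, P (i, j) * P (j, k) * P (k, i) := by
      simp [Matrix.trace, Matrix.mul_apply, toM, Finset.sum_mul]
    rw [this]
    refine (Finset.sum_le_sum fun i _ => Finset.sum_le_sum fun k _ => Finset.sum_le_sum fun j _ =>
      hb i j k).trans ?_
    simp
    linarith
  rw [fLdG, h2]
  have := mul_le_mul_of_nonneg_left h3 (by positivity : 0 ≤ b / 3)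
  nlinarith

lemma bdd (a b c C ξ η : ℝ) (ha : 0 < a) (hb : 0 < b) (hc : 0 < c) (hξ : 0 < ξ) (hη : 0 < η) :
    BddBelow {v | ∃ P ∈ Sym0E,
    v = 1 / ξ ^ 2 * fLdG a b c C (toM P) + 1 / η ^ 2 * gMagE (sStar a b c) P} := by
  set k := 1 / ξ ^ 2 with hk
  set l := 1 / η ^ 2 with hl
  have hk0 : 0 < k := by positivity
  have hl0 : 0 < l := by positivity
  obtain ⟨M, hM⟩ := poly_bdd (k * (a / 2) + k * (9 * b) + l) (k * (c / 4)) (by positivity) (by positivity)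
  refine ⟨k * C + l * (2 / 3 * sStar a b c) + M, ?_⟩
  rintro v ⟨P, hP, rfl⟩
  have h1 := mul_le_mul_of_nonneg_left (f_lower a b c C ha hb P hP) hk0.le
  have h2 := hM ‖P‖ (norm_nonneg _)
  have h3 : P (2, 2) ≤ ‖P‖ := (le_abs_self _).trans (e9_entry_le P _)
  have h4 := mul_le_mul_of_nonneg_left h3 hl0.le
  simp only [gMagE]
  have t0 := norm_nonneg P
  set t := ‖P‖
  have z1 : 0 ≤ k * (a / 2) * (t + t ^ 3) := by positivity
  have z2 : 0 ≤ k * (9 * b) * (t + t ^ 2) := by positivity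
  have z3 : 0 ≤ l * (t ^ 2 + t ^ 3) := by positivity
  nlinarith

lemma density_lower (a b c C ξ η : ℝ) (ha : 0 < a) (hb : 0 < b) (hc : 0 < c) (hξ : 0 < ξ)
    (hη : 0 < η) {δ : ℝ} (hδ : δ ≤ sStar a b c / 6)
    {Q U : E9} (hQ : Q ∈ Sym0E) {n : Fin 3 → ℝ} (hn : unitVec n)
    (hU : toM U = uniax (sStar a b c) n) (hQU : ‖Q - U‖ < δ) (h22 : Q (2, 2) < sStar a b c / 3) :
    1 / η ^ 2 * (sStar a b c / 6) ≤ 1 / ξ ^ 2 * fLdG a b c C (toM Q) +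
      1 / η ^ 2 * gMagE (sStar a b c) Q + C0const a b c C ξ η := by
  obtain ⟨P, hP, hf, hP22⟩ := competitor a b c C hQ hn hU hQU
  have := csInf_le (bdd a b c C ξ η ha hb hc hξ hη) ⟨P, hP, rfl⟩
  rw [C0const]
  rw [hf] at this
  have hl0 : 0 < 1 / η ^ 2 := by positivity
  have hg : sStar a b c / 6 ≤ gMagE (sStar a b c) Q - gMagE (sStar a b c) P := by
    simp only [gMagE]
    linarith
  have := mul_le_mul_of_nonneg_left hg hl0.le
  linarith

lemma ball_ediam (x : V3) {r : ℝ} (hr : 0 ≤ r) :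
    ediam (closedBall x (5 * r)) ≤ ENNReal.ofReal (10 * r) := by
  apply Metric.ediam_le
  intro y hy z hz
  rw [edist_dist]
  apply ENNReal.ofReal_le_ofReal
  have := dist_triangle_right y z x
  rw [mem_closedBall] at hy hz
  linarith

lemma cover (W : Set V3) (hW : IsOpen W) (N : V3 → ℝ) (hN : ContinuousOn N W) (hN0 : ∀ x, 0 ≤ N x)
    (e : ℝ) (he : 0 < e) (ρ : ℝ) (hρ : 0 < ρ) :
    ∃ (u : Set V3) (r : V3 → ℝ), u.Countable ∧ u ⊆ W ∧ (∀ x ∈ u, 0 < r x ∧ r x ≤ ρ ∧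
      closedBall x (5 * r x) ⊆ W ∧ (∀ y ∈ closedBall x (5 * r x), |N y - N x| ≤ e) ∧
      (N x + e) * (5 * r x) ≤ 1) ∧ W ⊆ (⋃ x ∈ u, closedBall x (5 * r x)) ∧
      u.PairwiseDisjoint (fun x => closedBall x (r x)) := by
  have hex : ∀ x : V3, ∃ r : ℝ, x ∈ W → (0 < r ∧ r ≤ ρ ∧
      closedBall x (5 * r) ⊆ W ∧ (∀ y ∈ closedBall x (5 * r), |N y - N x| ≤ e) ∧
      (N x + e) * (5 * r) ≤ 1) := by
    intro x
    by_cases hx : x ∈ W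
    · have h1 : ∀ᶠ y in nhds x, y ∈ W ∧ |N y - N x| ≤ e := by
        have h2 := (hN.continuousAt (hW.mem_nhds hx))
        have h3 := Metric.continuousAt_iff'.1 h2 e he
        filter_upwards [hW.mem_nhds hx, h3] with y hy hy2
        exact ⟨hy, hy2.le⟩
      obtain ⟨d, hd, hball⟩ := Metric.eventually_nhds_iff_ball.1 h1
      have hpos : 0 < N x + e := by linarith [hN0 x]
      have hd' : 0 < 1 / (5 * (N x + e)) := by positivity
      refine ⟨min ρ (min (d / 10) (1 / (5 * (N x + e)))), fun _ => ?_⟩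
      set r := min ρ (min (d / 10) (1 / (5 * (N x + e)))) with hr
      have r1 : r ≤ ρ := min_le_left _ _
      have r2 : r ≤ d / 10 := (min_le_right _ _).trans (min_le_left _ _)
      have r3 : r ≤ 1 / (5 * (N x + e)) := (min_le_right _ _).trans (min_le_right _ _)
      have hsub : closedBall x (5 * r) ⊆ ball x d := closedBall_subset_ball (by linarith)
      refine ⟨lt_min hρ (lt_min (by positivity) hd'), r1, fun y hy => (hball y (hsub hy)).1,
        fun y hy => (hball y (hsub hy)).2, ?_⟩
      rw [le_div_iff₀ (by positivity)] at r3
      linarith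
    · exact ⟨0, fun h => absurd h hx⟩
  choose r hr using hex
  obtain ⟨u, huW, hdis, hcov⟩ := Vitali.exists_disjoint_subfamily_covering_enlargement_closedBall W
    (fun x => x) r ρ (fun x hx => (hr x hx).2.1) 5 (by norm_num)
  refine ⟨u, r, ?_, huW, fun x hx => hr x (huW hx), ?_, hdis⟩
  · apply hdis.countable_of_nonempty_interior
    intro x hx
    refine ⟨x, ball_subset_interior_closedBall (mem_ball_self (hr x (huW hx)).1)⟩
  · intro x hx
    obtain ⟨b, hb, hsub⟩ := hcov x hx
    simp only [Set.mem_iUnion]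
    exact ⟨b, hb, hsub (mem_closedBall_self (hr x hx).1.le)⟩

lemma sym0_closed : IsClosed Sym0E := by
  have hc : Continuous toM := by
    apply continuous_matrix
    intro i j
    simp only [toM, Matrix.of_apply]
    fun_prop
  have : Sym0E = {A | (toM A)ᵀ = toM A} ∩ {A | (toM A).trace = 0} := rfl
  rw [this]
  exact (isClosed_eq hc.matrix_transpose hc).inter (isClosed_eq hc.matrix_trace continuous_const)

/-- A coarea type inequality. -/
lemma coarea (R : ℝ) (hR : 0 < R) : ∃ K > (0 : ℝ), ∀ (W : Set V3), IsOpen W →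
    ∀ Q : V3 → E9, ContDiffOn ℝ (⊤ : ℕ∞) Q W → (∀ x ∈ W, Q x ∈ Sym0E) →
    ∀ B : Set E9, MeasurableSet B → B ⊆ Sym0E → (∀ x ∈ W, ∀ Y ∈ B, ‖Q x - Y‖ ≤ R) →
    ∀ e : ℝ, 0 < e →
    ∫⁻ Y in B, μH[2] {x : V3 | x ∈ W ∧ Q x - Y ∈ TsetE} ∂(μH[5]) ≤
      ENNReal.ofReal K * ∫⁻ x in W, ENNReal.ofReal (‖fderiv ℝ Q x‖ + 2 * e) := by
  obtain ⟨K, hK, hKT⟩ := T_nbhd R hR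
  -- volume of unit ball
  have hv0 : 0 < (volume : Measure V3).real (ball (0 : V3) 1) := by
    apply ENNReal.toReal_pos
    · exact (measure_ball_pos _ _ one_pos).ne'
    · exact measure_ball_lt_top.ne
  set v := (volume : Measure V3).real (ball (0 : V3) 1) with hv
  refine ⟨500 * K / v, by positivity, ?_⟩
  intro W hW Q hQ hQS B hB hBS hBR e he
  set N : V3 → ℝ := fun x => ‖fderiv ℝ Q x‖ with hNdef
  have hN : ContinuousOn N W := (hQ.continuousOn_fderiv_of_isOpen hW (by simp)).norm
  have hN0 : ∀ x, 0 ≤ N x := fun x => norm_nonneg _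
  have hc := fun k : ℕ => cover W hW N hN hN0 e he (1 / (k + 1)) (by positivity)
  choose u r hu huW hur hcov hdis using hc
  have : ∀ k, Countable (u k) := fun k => (hu k).to_subtype
  -- bad sets
  let bad : ∀ k, u k → Set E9 := fun k x =>
    {Y | Y ∈ B ∧ ∃ y ∈ closedBall (x : V3) (5 * r k x), Q y - Y ∈ TsetE}
  let mb : ∀ k, u k → Set E9 := fun k x => toMeasurable (μH[5]) (bad k x)
  let h : ℕ → E9 → ENNReal := fun k Y =>
    ∑' x : u k, (mb k x).indicator (fun _ => ENNReal.ofReal ((10 * r k x) ^ 2)) Y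
  have hmeas : ∀ k, Measurable (h k) := fun k =>
    Measurable.tsum fun x => measurable_const.indicator (measurableSet_toMeasurable _ _)
  have hpt : ∀ Y ∈ B, μH[2] {x : V3 | x ∈ W ∧ Q x - Y ∈ TsetE} ≤ liminf (fun k => h k Y) atTop := by
    intro Y hY
    classical
    refine (Measure.hausdorffMeasure_le_liminf_tsum 2 _ (l := atTop)
      (fun k : ℕ => ENNReal.ofReal (10 * (1 / ((k : ℝ) + 1)))) ?_
      (fun k (x : u k) => if Y ∈ bad k x then closedBall (x : V3) (5 * r k x) else ∅) ?_ ?_).trans ?_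
    · rw [← ENNReal.ofReal_zero]
      apply ENNReal.tendsto_ofReal
      have := (tendsto_one_div_add_atTop_nhds_zero_nat (𝕜 := ℝ)).const_mul 10
      simpa using this
    · refine Eventually.of_forall fun k x => ?_
      split_ifs
      · refine (ball_ediam _ (hur k x x.2).1.le).trans ?_
        have := (hur k x x.2).2.1
        gcongr
      · simp
    · refine Eventually.of_forall fun k y hy => ?_
      have := hcov k hy.1
      simp only [Set.mem_iUnion] at this ⊢
      obtain ⟨x, hx, hyx⟩ := this
      refine ⟨⟨x, hx⟩, ?_⟩
      rw [if_pos]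
      · exact hyx
      · exact ⟨hY, y, hyx, hy.2⟩
    · refine liminf_le_liminf (Eventually.of_forall fun k => ?_)
      apply ENNReal.tsum_le_tsum
      intro x
      split_ifs with hb
      · rw [Set.indicator_of_mem (subset_toMeasurable _ _ hb)]
        refine (ENNReal.rpow_le_rpow (ball_ediam _ (hur k x x.2).1.le) (by norm_num)).trans ?_
        rw [ENNReal.ofReal_pow (by have := (hur k x x.2).1; positivity)]
        rw [← ENNReal.rpow_natCast]
        simp
      · simp
  have hint : ∀ k, ∫⁻ Y in B, h k Y ∂(μH[5]) ≤
      ENNReal.ofReal (500 * K / v) * ∫⁻ x in W, ENNReal.ofReal (‖fderiv ℝ Q x‖ + 2 * e) := by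
    intro k
    have hbad : ∀ x : u k, (μH[5] : Measure E9) (bad k x) ≤
        ENNReal.ofReal (K * ((N x + e) * (5 * r k x))) := by
      intro x
      obtain ⟨r0, r1, hb, hosc, hle⟩ := hur k x x.2
      have hpos : 0 < N x + e := by linarith [hN0 x]
      refine le_trans (measure_mono ?_) (hKT _ (by positivity) hle (Q x) (hQS _ (huW k x.2)))
      rintro Y ⟨hY, y, hy, hT⟩
      refine ⟨hBS hY, Q y - Y, hT, hBR _ (hb hy) _ hY, ?_⟩
      have hlip := (convex_closedBall (x : V3) (5 * r k x)).norm_image_sub_le_of_norm_fderiv_le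
        (𝕜 := ℝ) (f := Q) (C := N x + e)
        (fun z hz => (hQ.differentiableOn (by simp)).differentiableAt (hW.mem_nhds (hb hz)))
        (fun z hz => by linarith [(abs_le.1 (hosc z hz)).2]) hy
        (mem_closedBall_self (by positivity))
      have : Q x - Y - (Q y - Y) = Q x - Q y := by abel
      rw [this]
      refine hlip.trans ?_
      gcongr
      rw [← dist_eq_norm, dist_comm]
      exact hy
    have hball : ∀ x : u k, ENNReal.ofReal ((10 * r k x) ^ 2) * (μH[5] : Measure E9) (bad k x) ≤
        ENNReal.ofReal (500 * K / v) *
          ∫⁻ y in closedBall (x : V3) (r k x), ENNReal.ofReal (‖fderiv ℝ Q y‖ + 2 * e) := by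
      intro x
      obtain ⟨r0, r1, hb, hosc, hle⟩ := hur k x x.2
      have hpos : 0 < N x + e := by linarith [hN0 x]
      have hvol : (volume : Measure V3) (closedBall (x : V3) (r k x)) =
          ENNReal.ofReal (r k x ^ 3 * v) := by
        rw [Measure.addHaar_closedBall _ _ r0.le, ENNReal.ofReal_mul (by positivity), hv,
          ofReal_measureReal measure_ball_lt_top.ne]
        simp
      calc _ ≤ ENNReal.ofReal ((10 * r k x) ^ 2) * ENNReal.ofReal (K * ((N x + e) * (5 * r k x))) := by
            gcongr
            exact hbad x
        _ = ENNReal.ofReal (500 * K / v) * (ENNReal.ofReal (N x + e) *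
              (volume : Measure V3) (closedBall (x : V3) (r k x))) := by
            rw [hvol, ← ENNReal.ofReal_mul (by positivity), ← ENNReal.ofReal_mul (by positivity),
              ← ENNReal.ofReal_mul (by positivity)]
            congr 1
            field_simp
            ring
        _ ≤ _ := by
            gcongr
            rw [← setLIntegral_const]
            apply setLIntegral_mono' measurableSet_closedBall
            intro y hy
            apply ENNReal.ofReal_le_ofReal
            have := (abs_le.1 (hosc y (closedBall_subset_closedBall (by linarith) hy))).1
            simp only [hNdef] at this ⊢
            linarith
    calc _ ≤ ∑' x : u k, ENNReal.ofReal ((10 * r k x) ^ 2) * (μH[5] : Measure E9) (bad k x) := by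
          rw [lintegral_tsum fun x =>
            (measurable_const.indicator (measurableSet_toMeasurable _ _)).aemeasurable]
          apply ENNReal.tsum_le_tsum
          intro x
          rw [lintegral_indicator_const (measurableSet_toMeasurable _ _)]
          refine mul_le_mul' le_rfl ?_
          refine (Measure.restrict_le_self _).trans ?_
          rw [measure_toMeasurable]
      _ ≤ ∑' x : u k, ENNReal.ofReal (500 * K / v) *
          ∫⁻ y in closedBall (x : V3) (r k x), ENNReal.ofReal (‖fderiv ℝ Q y‖ + 2 * e) :=
          ENNReal.tsum_le_tsum hball
      _ = ENNReal.ofReal (500 * K / v) *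
          ∫⁻ y in ⋃ x : u k, closedBall (x : V3) (r k x), ENNReal.ofReal (‖fderiv ℝ Q y‖ + 2 * e) := by
          rw [ENNReal.tsum_mul_left, lintegral_iUnion (fun _ => measurableSet_closedBall)]
          intro x y hxy
          exact hdis k x.2 y.2 (fun h => hxy (Subtype.ext h))
      _ ≤ _ := by
          gcongr
          apply Set.iUnion_subset
          intro x
          obtain ⟨r0, r1, hb, hosc, hle⟩ := hur k x x.2
          exact (closedBall_subset_closedBall (by linarith)).trans hb
  calc _ ≤ ∫⁻ Y in B, liminf (fun k => h k Y) atTop ∂(μH[5]) := setLIntegral_mono' hB hpt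
    _ ≤ liminf (fun k => ∫⁻ Y in B, h k Y ∂(μH[5])) atTop := lintegral_liminf_le hmeas
    _ ≤ _ := by
        refine (liminf_le_liminf (Eventually.of_forall hint)).trans ?_
        simp

lemma opnorm_le (D : V3 →L[ℝ] E9) :
    ‖D‖ ^ 2 ≤ ∑ i : Fin 3, ‖D (EuclideanSpace.single i (1 : ℝ))‖ ^ 2 := by
  set S := ∑ i : Fin 3, ‖D (EuclideanSpace.single i (1 : ℝ))‖ ^ 2 with hS
  have hS0 : 0 ≤ S := Finset.sum_nonneg fun i _ => sq_nonneg _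
  have : ‖D‖ ≤ Real.sqrt S := by
    apply D.opNorm_le_bound (Real.sqrt_nonneg _)
    intro x
    have hx : x = ∑ i : Fin 3, x i • EuclideanSpace.single i (1 : ℝ) := by
      ext j
      simp [Finset.sum_apply, Pi.single_apply]
    have h1 : ‖D x‖ ≤ ∑ i : Fin 3, ‖D (EuclideanSpace.single i (1 : ℝ))‖ * |x i| := by
      conv_lhs => rw [hx, map_sum]
      refine (norm_sum_le _ _).trans (Finset.sum_le_sum fun i _ => ?_)
      rw [map_smul, norm_smul, Real.norm_eq_abs, mul_comm]
    have h2 := Finset.sum_mul_sq_le_sq_mul_sq Finset.univ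
      (fun i : Fin 3 => ‖D (EuclideanSpace.single i (1 : ℝ))‖) (fun i => |x i|)
    have h3 : ∑ i, |x i| ^ 2 = ‖x‖ ^ 2 := by
      rw [EuclideanSpace.norm_sq_eq]
      simp
    rw [h3, ← hS] at h2
    refine h1.trans ?_
    rw [← Real.sqrt_sq (norm_nonneg x), ← Real.sqrt_mul hS0]
    exact Real.le_sqrt_of_sq_le h2
  have h4 := pow_le_pow_left₀ (norm_nonneg D) this 2
  rwa [Real.sq_sqrt hS0] at h4

lemma sStar_pos (a b c : ℝ) (hb : 0 < b) (hc : 0 < c) : 0 < sStar a b c := by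
  rw [sStar]
  have := Real.sqrt_nonneg (b ^ 2 + 24 * a * c)
  positivity

lemma N_nonempty (s : ℝ) : (NsetE s).Nonempty := by
  refine ⟨WithLp.toLp 2 fun p => uniax s ![0, 0, 1] p.1 p.2, ![0, 0, 1], ?_, ?_⟩
  · simp [unitVec, Fin.sum_univ_three]
  · ext i j
    simp [toM]

lemma N_norm {s : ℝ} (hs : 0 < s) {U : E9} {n : Fin 3 → ℝ} (hn : unitVec n)
    (hU : toM U = uniax s n) : ‖U‖ ≤ 6 * s := by
  have : 6 * s = 3 * (2 * s) := by ring
  rw [this]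
  apply e9_norm_le (by positivity)
  rintro ⟨i, j⟩
  have h1 : U (i, j) = s * (n i * n j - 1 / 3 * (1 : Mat3) i j) := by
    have := congrFun (congrFun hU i) j
    simpa [toM, uniax, Matrix.vecMulVec] using this
  have hni : ∀ i, |n i| ≤ 1 := by
    intro i
    rw [abs_le_one_iff_mul_self_le_one, ← sq, ← hn]
    exact Finset.single_le_sum (f := fun i => n i ^ 2) (fun j _ => sq_nonneg _) (Finset.mem_univ i)
  have h2 := abs_mul_le_of (hni i) (hni j)
  have h3 : |(1 : Mat3) i j| ≤ 1 := by
    rw [Matrix.one_apply]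
    split_ifs <;> simp
  rw [h1, abs_mul, abs_of_pos hs, mul_comm]
  refine mul_le_mul_of_nonneg_right ?_ hs.le
  rw [abs_le] at h2 h3 ⊢
  constructor <;> linarith

theorem statement11 (a b c C : ℝ) (ha : 0 < a) (hb : 0 < b) (hc : 0 < c)
    (hC : IsLeast ((fun A => fLdG a b c C (toM A)) '' Sym0E) 0) :
    ∃ α₀ > (0 : ℝ), ∃ δ₀ > (0 : ℝ),
      ∀ α : ℝ, 0 < α → α < α₀ → ∀ δ : ℝ, 0 < δ → δ < δ₀ →
      ∃ Cc > (0 : ℝ),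
        ∀ (Ω : Set V3), IsOpen Ω → ∀ η ξ : ℝ, 0 < η → 0 < ξ →
        ∀ Q : V3 → E9, ContDiffOn ℝ (⊤ : ℕ∞) Q Ω → (∀ x ∈ Ω, Q x ∈ Sym0E) →
        (∫⁻ Y in {Y : E9 | Y ∈ Sym0E ∧ ‖Y‖ < α},
            μH[2] {x : V3 | (x ∈ Ω ∧ infDist (Q x) (NsetE (sStar a b c)) < δ) ∧
              Q x - Y ∈ TsetE} ∂(μH[5])) ≤
          ENNReal.ofReal (Cc * η) *
            ∫⁻ x in {x : V3 | x ∈ Ω ∧ infDist (Q x) (NsetE (sStar a b c)) < δ},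
              ENNReal.ofReal (density a b c C ξ η Ω Q x) := by
  have hs := sStar_pos a b c hb hc
  set s := sStar a b c with hsdef
  obtain ⟨K, hK, hco⟩ := coarea (7 * s) (by positivity)
  refine ⟨s / 12, by positivity, s / 12, by positivity, ?_⟩
  intro α hα hα0 δ hδ hδ0
  refine ⟨K * (1 + 9 / s), by positivity, ?_⟩
  intro Ω hΩ η ξ hη hξ Q hQ hQS
  set W : Set V3 := {x | (x ∈ Ω ∧ infDist (Q x) (NsetE s) < δ) ∧ Q x (2, 2) < s / 3} with hW
  have hWo : IsOpen W := by
    have h1 : IsOpen (Ω ∩ Q ⁻¹' {A | infDist A (NsetE s) < δ ∧ A (2, 2) < s / 3}) := by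
      apply hQ.continuousOn.isOpen_inter_preimage hΩ
      apply IsOpen.and
      · exact isOpen_lt (continuous_infDist_pt _) continuous_const
      · exact isOpen_lt (by fun_prop) continuous_const
    convert h1 using 1
    ext x
    simp only [hW, Set.mem_setOf_eq, Set.mem_inter_iff, Set.mem_preimage]
    tauto
  have hWΩ : W ⊆ Ω := fun x hx => hx.1.1
  have hnear : ∀ x, infDist (Q x) (NsetE s) < δ → ∃ U : E9, ∃ n, unitVec n ∧ toM U = uniax s n ∧
      ‖Q x - U‖ < δ := by
    intro x hx
    obtain ⟨U, ⟨n, hn, hU⟩, hd⟩ := (infDist_lt_iff (N_nonempty s)).1 hx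
    exact ⟨U, n, hn, hU, by rwa [← dist_eq_norm]⟩
  have hBm : MeasurableSet {Y : E9 | Y ∈ Sym0E ∧ ‖Y‖ < α} :=
    sym0_closed.measurableSet.inter (isOpen_lt continuous_norm continuous_const).measurableSet
  have key := hco W hWo Q (hQ.mono hWΩ) (fun x hx => hQS x (hWΩ hx)) _ hBm (fun Y hY => hY.1)
    (by
      rintro x hx Y ⟨-, hY⟩
      obtain ⟨U, n, hn, hU, hd⟩ := hnear x hx.1.2
      have h1 := N_norm hs hn hU
      have h2 : Q x - Y = (Q x - U) + U - Y := by abel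
      rw [h2]
      refine (norm_sub_le _ _).trans ?_
      have := norm_add_le (Q x - U) U
      linarith) (1 / (2 * η)) (by positivity)
  calc _ ≤ _ := by
        refine setLIntegral_mono' (g := fun Y => μH[2] {x : V3 | x ∈ W ∧ Q x - Y ∈ TsetE}) hBm ?_
        rintro Y ⟨-, hY⟩
        apply measure_mono
        rintro x ⟨hx, hT⟩
        obtain ⟨U, n, hn, hU, hd⟩ := hnear x hx.2
        exact ⟨⟨hx, near_T hs (by linarith) hn hU hd hY hT⟩, hT⟩
    _ ≤ _ := key
    _ ≤ ENNReal.ofReal K * ∫⁻ x in W, ENNReal.ofReal (η * (1 + 9 / s)) *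
          ENNReal.ofReal (density a b c C ξ η Ω Q x) := by
        gcongr ENNReal.ofReal K * ?_
        apply setLIntegral_mono' hWo.measurableSet
        intro x hx
        rw [← ENNReal.ofReal_mul (by positivity)]
        apply ENNReal.ofReal_le_ofReal
        obtain ⟨U, n, hn, hU, hd⟩ := hnear x hx.1.2
        have hden := density_lower a b c C ξ η ha hb hc hξ hη (by linarith) (hQS x (hWΩ hx)) hn hU hd hx.2
        rw [← hsdef] at hden
        have hop := opnorm_le (fderiv ℝ Q x)
        rw [density, fderivWithin_of_isOpen hΩ (hWΩ hx)]
        set S := ∑ i : Fin 3, ‖fderiv ℝ Q x (EuclideanSpace.single i (1 : ℝ))‖ ^ 2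
        set t := ‖fderiv ℝ Q x‖
        have h1 : t + 2 * (1 / (2 * η)) ≤ η * (S / 2 + 3 / 2 * (1 / η ^ 2)) := by
          have h2 : η * (t - 1 / η) ^ 2 ≥ 0 := by positivity
          have h3 : η * (t - 1 / η) ^ 2 = η * t ^ 2 - 2 * t + 1 / η := by
            field_simp
            ring
          have h4 : η * (S / 2 + 3 / 2 * (1 / η ^ 2)) = η * S / 2 + 3 / 2 * (1 / η) := by
            field_simp
          have h5 := mul_le_mul_of_nonneg_left hop hη.le
          have h6 : 2 * (1 / (2 * η)) = 1 / η := by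
            field_simp
          rw [h4, h6]
          linarith
        refine h1.trans ?_
        rw [mul_assoc]
        refine mul_le_mul_of_nonneg_left ?_ hη.le
        have hS0 : 0 ≤ S := (sq_nonneg _).trans hop
        have hk : 0 < 1 + 9 / s := by positivity
        calc S / 2 + 3 / 2 * (1 / η ^ 2) ≤ (1 + 9 / s) * (S / 2 + 1 / η ^ 2 * (s / 6)) := by
              have e1 : (1 + 9 / s) * (S / 2 + 1 / η ^ 2 * (s / 6)) =
                  S / 2 + 9 / s * (S / 2) + 1 / η ^ 2 * (s / 6) + 3 / 2 * (1 / η ^ 2) := by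
                field_simp
                ring
              have : 0 ≤ 9 / s * (S / 2) := by positivity
              have : 0 ≤ 1 / η ^ 2 * (s / 6) := by positivity
              linarith
          _ ≤ _ := by
              refine mul_le_mul_of_nonneg_left ?_ hk.le
              linarith
    _ ≤ _ := by
        rw [lintegral_const_mul' _ _ ENNReal.ofReal_ne_top, ← mul_assoc, ← ENNReal.ofReal_mul hK.le]
        have : K * (η * (1 + 9 / s)) = K * (1 + 9 / s) * η := by ring
        rw [this]
        gcongr
        exact fun x hx => hx.1
end
end

section
/- Let s*, c* > 0, let 0 ≤ r₁ < r₂ < ∞, and let n₃ ∈ H¹((r₁,r₂)) take values in [−1,1] with n₃(r₁) = −1 and n₃(r₂) = 1. Then ∫_{r₁}^{r₂} [ s*²·n₃'(r)² / (1 − n₃(r)²) + c*²·(1 − n₃(r)²) ] dr ≥ 4·s*·c*, where the integrand is interpreted as 0 at points where |n₃(r)| = 1 and n₃'(r) = 0 (which holds almost everywhere on the set {|n₃| = 1}) and +∞ where |n₃(r)| = 1 and n₃'(r) ≠ 0. In particular I(r₁, r₂, −1, 1) ≥ 4·s*·c*. -/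
/- STATEMENT 12: Let s*, c* > 0, 0 ≤ r₁ < r₂ < ∞, and n₃ ∈ H¹((r₁,r₂)) with values
in [−1,1], n₃(r₁) = −1, n₃(r₂) = 1. Then
∫_{r₁}^{r₂} [ s*²n₃'²/(1−n₃²) + c*²(1−n₃²) ] dr ≥ 4 s* c*,
the integrand being 0 where |n₃|=1, n₃'=0 and +∞ where |n₃|=1, n₃'≠0.
The H¹ function is represented by its continuous representative together with its
weak derivative g (square-integrable), via the fundamental theorem of calculus. -/

noncomputable section

open MeasureTheory Set
open scoped ENNReal

/-- The (extended-real-valued) integrand s*²d²/(1−n²) + c*²(1−n²), interpreted as +∞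
when |n| = 1 and d ≠ 0 (and as 0 when |n| = 1 and d = 0, since then both terms vanish). -/
def integrand (sS cS : ℝ) (n d : ℝ) : ℝ≥0∞ :=
  if 1 - n ^ 2 = 0 ∧ d ≠ 0 then ⊤
  else ENNReal.ofReal (sS ^ 2 * d ^ 2 / (1 - n ^ 2) + cS ^ 2 * (1 - n ^ 2))

theorem statement12 (sS cS : ℝ) (hsS : 0 < sS) (hcS : 0 < cS)
    (r₁ r₂ : ℝ) (hr₁ : 0 ≤ r₁) (hr₁₂ : r₁ < r₂)
    (n₃ g : ℝ → ℝ)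
    (hval : ∀ r ∈ Icc r₁ r₂, n₃ r ∈ Icc (-1 : ℝ) 1)
    (hg1 : IntegrableOn g (Icc r₁ r₂))
    (hg2 : IntegrableOn (fun t => (g t) ^ 2) (Icc r₁ r₂))
    (hftc : ∀ x ∈ Icc r₁ r₂, n₃ x = n₃ r₁ + ∫ t in r₁..x, g t)
    (hbdry₁ : n₃ r₁ = -1) (hbdry₂ : n₃ r₂ = 1) :
    ENNReal.ofReal (4 * sS * cS) ≤ ∫⁻ r in Ioo r₁ r₂, integrand sS cS (n₃ r) (g r) := by
  have h4 : 4 * sS * cS = ∫ t in Ioo r₁ r₂, 2 * sS * cS * g t := by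
    have h := hftc r₂ ⟨hr₁₂.le, le_rfl⟩
    rw [intervalIntegral.integral_of_le hr₁₂.le, integral_Ioc_eq_integral_Ioo, hbdry₁, hbdry₂] at h
    rw [integral_const_mul]
    have h2 : ∫ t in Ioo r₁ r₂, g t = 2 := by linarith
    rw [h2]; ring
  have hint : IntegrableOn (fun t => 2 * sS * cS * g t) (Ioo r₁ r₂) :=
    (hg1.mono_set Ioo_subset_Icc_self).const_mul _
  have h5 : 4 * sS * cS ≤ ∫ t in Ioo r₁ r₂, |2 * sS * cS * g t| := by
    rw [h4]
    exact (le_abs_self _).trans abs_integral_le_integral_abs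
  refine (ENNReal.ofReal_le_ofReal h5).trans ?_
  rw [ofReal_integral_eq_lintegral_ofReal hint.abs
    (Filter.Eventually.of_forall fun _ => abs_nonneg _)]
  refine setLIntegral_mono' measurableSet_Ioo fun r hr => ?_
  have hv := hval r (Ioo_subset_Icc_self hr)
  have hn : 0 ≤ 1 - n₃ r ^ 2 := by nlinarith [hv.1, hv.2]
  unfold integrand
  split_ifs with hc
  · exact le_top
  · apply ENNReal.ofReal_le_ofReal
    rcases hn.eq_or_lt with h0 | hpos
    · have hg0 : g r = 0 := by
        by_contra hne
        exact hc ⟨h0.symm, hne⟩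
      simp [hg0, ← h0]
    · have e : sS ^ 2 * g r ^ 2 / (1 - n₃ r ^ 2) + cS ^ 2 * (1 - n₃ r ^ 2)
          = ((sS * g r) ^ 2 + (cS * (1 - n₃ r ^ 2)) ^ 2) / (1 - n₃ r ^ 2) := by
        field_simp
      rw [e, le_div_iff₀ hpos]
      have hp : 0 < 2 * sS * cS := by positivity
      rw [abs_mul, abs_of_pos hp]
      have hsq : (sS * g r) ^ 2 = (sS * |g r|) ^ 2 := by rw [mul_pow, mul_pow, sq_abs]
      rw [hsq]
      nlinarith [sq_nonneg (sS * |g r| - cS * (1 - n₃ r ^ 2))]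
end
end

section
/- Let s*, c* > 0 and θ ∈ [0, π]. Let n₃ : [0,∞) → [−1,1] be locally in H¹ with n₃(0) = cos θ and n₃(r) → 1 as r → ∞. Then ∫₀^∞ [ s*²·n₃'(r)² / (1 − n₃(r)²) + c*²·(1 − n₃(r)²) ] dr ≥ 2·s*·c*·(1 − cos θ), where the integrand is interpreted as 0 at points where |n₃(r)| = 1 and n₃'(r) = 0 (which holds almost everywhere on {|n₃| = 1}) and +∞ where |n₃(r)| = 1 and n₃'(r) ≠ 0. Consequently I(0, ∞, cos θ, 1) = 2·s*·c*·(1 − cos θ). -/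
/- STATEMENT 14: Let s*, c* > 0 and θ ∈ [0,π]. For every locally-H¹ function
n₃ : [0,∞) → [−1,1] with n₃(0) = cos θ and n₃(r) → 1 as r → ∞,
∫₀^∞ [ s*²n₃'²/(1−n₃²) + c*²(1−n₃²) ] dr ≥ 2 s* c* (1 − cos θ) (integrand interpreted
as 0 where |n₃|=1 and n₃'=0, +∞ where |n₃|=1 and n₃'≠0).
Consequently I(0,∞,cosθ,1) = 2 s* c* (1 − cos θ).
H¹ functions are represented by their continuous representative together with the
weak derivative g, via the fundamental theorem of calculus. -/

noncomputable section

open MeasureTheory Set Filter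
open scoped ENNReal

/-- Admissible pairs (n₃, g): n₃ with values in [−1,1] on [0,∞), weak derivative g
locally square-integrable, n₃(0) = cos θ (via the FTC representation) and n₃ → 1 at ∞. -/
def Adm (θ : ℝ) (n₃ g : ℝ → ℝ) : Prop :=
  (∀ r : ℝ, 0 ≤ r → n₃ r ∈ Icc (-1 : ℝ) 1) ∧
  (∀ x : ℝ, 0 < x → IntegrableOn g (Ioc 0 x)) ∧
  (∀ x : ℝ, 0 < x → IntegrableOn (fun t => (g t) ^ 2) (Ioc 0 x)) ∧
  (∀ x : ℝ, 0 ≤ x → n₃ x = Real.cos θ + ∫ t in (0 : ℝ)..x, g t) ∧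
  Tendsto n₃ atTop (nhds 1)

/-- The energy of the pair (n₃, g) on (0,∞). -/
def energy1d (sS cS : ℝ) (n₃ g : ℝ → ℝ) : ℝ≥0∞ :=
  ∫⁻ r in Ioi (0 : ℝ), integrand sS cS (n₃ r) (g r)

lemma aux_pt (s c n d : ℝ) (hs : 0 < s) (hc : 0 < c) (hn : n ∈ Icc (-1 : ℝ) 1) :
    ENNReal.ofReal (2 * s * c * d) ≤ integrand s c n d := by
  unfold integrand
  split_ifs with h
  · exact le_top
  · apply ENNReal.ofReal_le_ofReal
    have h1 : 0 ≤ 1 - n ^ 2 := by nlinarith [hn.1, hn.2]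
    rcases h1.eq_or_lt with h0 | h0
    · have : d = 0 := by
        by_contra hd
        exact h ⟨h0.symm, hd⟩
      simp [this, ← h0]
    · rw [← sub_nonneg]
      have : s ^ 2 * d ^ 2 / (1 - n ^ 2) + c ^ 2 * (1 - n ^ 2) - 2 * s * c * d
          = (s * d - c * (1 - n ^ 2)) ^ 2 / (1 - n ^ 2) := by
        field_simp
        ring
      rw [this]
      positivity

lemma aux_lower (s c : ℝ) (hs : 0 < s) (hc : 0 < c) (θ : ℝ) (n g : ℝ → ℝ) (h : Adm θ n g) :
    ENNReal.ofReal (2 * s * c * (1 - Real.cos θ)) ≤ energy1d s c n g := by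
  obtain ⟨h1, h2, h3, h4, h5⟩ := h
  have key : ∀ x : ℝ, 0 < x →
      ENNReal.ofReal (2 * s * c * (n x - Real.cos θ)) ≤ energy1d s c n g := by
    intro x hx
    have hi : IntegrableOn (fun t => 2 * s * c * g t) (Ioc 0 x) := (h2 x hx).const_mul _
    have e1 : 2 * s * c * (n x - Real.cos θ) = ∫ t in Ioc 0 x, 2 * s * c * g t := by
      rw [h4 x hx.le, intervalIntegral.integral_of_le hx.le, integral_const_mul]
      ring
    have e2 : ∫ t in Ioc 0 x, 2 * s * c * g t ≤ ∫ t in Ioc 0 x, max (2 * s * c * g t) 0 :=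
      integral_mono hi hi.pos_part (fun t => le_max_left _ _)
    have e3 : ENNReal.ofReal (∫ t in Ioc 0 x, max (2 * s * c * g t) 0)
        = ∫⁻ t in Ioc 0 x, ENNReal.ofReal (max (2 * s * c * g t) 0) :=
      ofReal_integral_eq_lintegral_ofReal hi.pos_part
        (Eventually.of_forall fun t => le_max_right _ _)
    rw [e1]
    refine (ENNReal.ofReal_le_ofReal e2).trans ?_
    rw [e3]
    unfold energy1d
    refine le_trans (setLIntegral_mono' measurableSet_Ioc ?_)
      (lintegral_mono_set (fun t (ht : t ∈ Ioc 0 x) => ht.1))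
    intro t ht
    rw [ENNReal.ofReal_max]
    simpa using aux_pt s c (n t) (g t) hs hc (h1 t ht.1.le)
  have ht : Tendsto (fun x => ENNReal.ofReal (2 * s * c * (n x - Real.cos θ))) atTop
      (nhds (ENNReal.ofReal (2 * s * c * (1 - Real.cos θ)))) :=
    ENNReal.tendsto_ofReal ((h5.sub_const _).const_mul _)
  refine le_of_tendsto ht ?_
  filter_upwards [eventually_gt_atTop (0 : ℝ)] with x hx using key x hx

lemma aux_upper (s c : ℝ) (hs : 0 < s) (hc : 0 < c) (θ u0 β : ℝ) (hu : 0 ≤ u0) (hβ : 0 < β)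
    (hθ : Real.cos θ = 1 - 2 / (1 + u0 ^ 2)) :
    ∃ n g : ℝ → ℝ, Adm θ n g ∧
      energy1d s c n g ≤ ENNReal.ofReal (2 * s * c * (1 - Real.cos θ) + 8 * s * c * β ^ 2) := by
  obtain ⟨k, hk⟩ : ∃ k, k = c / s := ⟨_, rfl⟩
  have hk0 : 0 < k := by rw [hk]; positivity
  have hck : c = s * k := by rw [hk]; field_simp
  let u : ℝ → ℝ := fun r => (u0 + β) * Real.exp (k * r) - β * Real.exp (-(k * r))
  let v : ℝ → ℝ := fun r => (u0 + β) * Real.exp (k * r) + β * Real.exp (-(k * r))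
  have hud : ∀ r, HasDerivAt u (k * v r) r := by
    intro r
    have a : HasDerivAt (fun r : ℝ => k * r) k r := by
      simpa using (hasDerivAt_id r).const_mul k
    have := (a.exp.const_mul (u0 + β)).sub (a.neg.exp.const_mul β)
    refine this.congr_deriv ?_
    simp only [v, Pi.neg_apply]
    ring
  have huc : Continuous u := by fun_prop
  have hvc : Continuous v := by fun_prop
  let n : ℝ → ℝ := fun r => 1 - 2 / (1 + u r ^ 2)
  let g : ℝ → ℝ := fun r => 4 * u r * (k * v r) / (1 + u r ^ 2) ^ 2
  have hp : ∀ r, 0 < 1 + u r ^ 2 := fun r => by positivity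
  have hnd : ∀ r, HasDerivAt n (g r) r := by
    intro r
    have := (((hud r).pow 2).const_add 1)
    have := (((hasDerivAt_const r (2:ℝ)).div this (hp r).ne').const_sub 1)
    refine this.congr_deriv ?_
    simp only [g, Pi.pow_apply]
    push_cast
    ring
  have hgc : Continuous g :=
    Continuous.div (by fun_prop) (by fun_prop) (fun r => by have := hp r; positivity)
  have hupos : ∀ r, 0 < r → 0 < u r := by
    intro r hr
    have h1 : Real.exp (-(k * r)) < Real.exp (k * r) :=
      Real.exp_lt_exp.2 (by nlinarith [mul_pos hk0 hr])
    have h2 : 0 ≤ u0 * Real.exp (k * r) := by positivity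
    simp only [u]
    nlinarith
  have hvpos : ∀ r, 0 < v r := by
    intro r
    simp only [v]
    positivity
  have hkr : Tendsto (fun r : ℝ => k * r) atTop atTop := tendsto_id.const_mul_atTop hk0
  have hut : Tendsto u atTop atTop := by
    have a : Tendsto (fun r => (u0 + β) * Real.exp (k * r)) atTop atTop :=
      (Real.tendsto_exp_atTop.comp hkr).const_mul_atTop (by positivity)
    have b : Tendsto (fun r => -(β * Real.exp (-(k * r)))) atTop (nhds (-(β * 0))) :=
      ((Real.tendsto_exp_neg_atTop_nhds_zero.comp hkr).const_mul β).neg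
    simpa [u, sub_eq_add_neg] using a.atTop_add b
  have hnt : Tendsto n atTop (nhds 1) := by
    have a : Tendsto (fun r => 1 + u r ^ 2) atTop atTop :=
      tendsto_atTop_add_const_left _ _ ((tendsto_pow_atTop two_ne_zero).comp hut)
    simpa using (a.const_div_atTop 2).const_sub 1
  have hn0 : n 0 = Real.cos θ := by
    simp [n, u, hθ]
  refine ⟨n, g, ⟨?_, ?_, ?_, ?_, hnt⟩, ?_⟩
  · intro r _
    have h1 : 0 < 2 / (1 + u r ^ 2) := div_pos two_pos (hp r)
    have h2 : 2 / (1 + u r ^ 2) ≤ 2 := by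
      rw [div_le_iff₀ (hp r)]; nlinarith [sq_nonneg (u r)]
    constructor <;> simp only [n] <;> linarith
  · intro x _
    exact (hgc.integrableOn_Icc).mono_set Ioc_subset_Icc_self
  · intro x _
    exact ((hgc.pow 2).integrableOn_Icc).mono_set Ioc_subset_Icc_self
  · intro x _
    rw [intervalIntegral.integral_eq_sub_of_hasDerivAt (fun r _ => hnd r)
      (hgc.intervalIntegrable _ _), hn0]
    ring
  · let F : ℝ → ℝ := fun r => 2 * s * c * n r - 8 * s * c * β ^ 2 * Real.exp (-(2 * k * r))
    let f : ℝ → ℝ := fun r => 2 * s * c * g r + 16 * c ^ 2 * β ^ 2 * Real.exp (-(2 * k * r))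
    have hF : ∀ r, HasDerivAt F (f r) r := by
      intro r
      have a : HasDerivAt (fun r : ℝ => -(2 * k * r)) (-(2 * k)) r := by
        refine ((hasDerivAt_id r).const_mul (2 * k)).neg.congr_deriv (by simp)
      refine (((hnd r).const_mul (2 * s * c)).sub
        (a.exp.const_mul (8 * s * c * β ^ 2))).congr_deriv ?_
      simp only [f, hck]
      ring
    have hf0 : ∀ r ∈ Ioi (0 : ℝ), 0 ≤ f r := by
      intro r hr
      have := hupos r hr
      have := hvpos r
      simp only [f, g]
      positivity
    have hFt : Tendsto F atTop (nhds (2 * s * c)) := by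
      have hkr2 : Tendsto (fun r : ℝ => 2 * k * r) atTop atTop :=
        tendsto_id.const_mul_atTop (by positivity)
      have := (hnt.const_mul (2 * s * c)).sub
        ((Real.tendsto_exp_neg_atTop_nhds_zero.comp hkr2).const_mul (8 * s * c * β ^ 2))
      simpa using this
    have hFi := integrableOn_Ioi_deriv_of_nonneg' (fun r _ => hF r) hf0 hFt
    have hFe := integral_Ioi_of_hasDerivAt_of_nonneg' (fun r _ => hF r) hf0 hFt
    have hF0 : F 0 = 2 * s * c * Real.cos θ - 8 * s * c * β ^ 2 := by
      simp [F, hn0]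
    have e : 2 * s * c * (1 - Real.cos θ) + 8 * s * c * β ^ 2 = ∫ r in Ioi (0 : ℝ), f r := by
      rw [hFe, hF0]; ring
    rw [e, ofReal_integral_eq_lintegral_ofReal hFi
      ((ae_restrict_iff' measurableSet_Ioi).2 (Eventually.of_forall hf0))]
    unfold energy1d
    refine setLIntegral_mono' measurableSet_Ioi ?_
    intro r hr
    have hur := hupos r hr
    have hq := hp r
    have h1n : 1 - n r ^ 2 = 4 * u r ^ 2 / (1 + u r ^ 2) ^ 2 := by
      simp only [n]
      field_simp
      ring
    have hne : 0 < 1 - n r ^ 2 := by rw [h1n]; positivity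
    unfold integrand
    rw [if_neg (fun h => hne.ne' h.1)]
    apply ENNReal.ofReal_le_ofReal
    rw [h1n]
    have hexp : Real.exp (-(2 * k * r)) = Real.exp (-(k * r)) ^ 2 := by
      rw [← Real.exp_nat_mul]; congr 1; push_cast; ring
    have hvu : v r - u r = 2 * β * Real.exp (-(k * r)) := by
      simp only [u, v]; ring
    have hex : 16 * c ^ 2 * β ^ 2 * Real.exp (-(2 * k * r)) = 4 * c ^ 2 * (v r - u r) ^ 2 := by
      rw [hexp, hvu]; ring
    have hlhs : s ^ 2 * g r ^ 2 / (4 * u r ^ 2 / (1 + u r ^ 2) ^ 2)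
        + c ^ 2 * (4 * u r ^ 2 / (1 + u r ^ 2) ^ 2)
        = 2 * s * c * g r + 4 * c ^ 2 * (v r - u r) ^ 2 / (1 + u r ^ 2) ^ 2 := by
      simp only [g, hck]
      field_simp
      ring
    rw [hlhs]
    simp only [f]
    rw [hex]
    have : 4 * c ^ 2 * (v r - u r) ^ 2 / (1 + u r ^ 2) ^ 2 ≤ 4 * c ^ 2 * (v r - u r) ^ 2 :=
      div_le_self (by positivity) (one_le_pow₀ (by nlinarith [sq_nonneg (u r)]))
    linarith

theorem statement14 (sS cS : ℝ) (hsS : 0 < sS) (hcS : 0 < cS)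
    (θ : ℝ) (hθ : θ ∈ Icc 0 Real.pi) :
    (∀ n₃ g : ℝ → ℝ, Adm θ n₃ g →
      ENNReal.ofReal (2 * sS * cS * (1 - Real.cos θ)) ≤ energy1d sS cS n₃ g) ∧
    sInf {E : ℝ≥0∞ | ∃ n₃ g : ℝ → ℝ, Adm θ n₃ g ∧ E = energy1d sS cS n₃ g} =
      ENNReal.ofReal (2 * sS * cS * (1 - Real.cos θ)) := by
  have hlow := aux_lower sS cS hsS hcS θ
  refine ⟨hlow, le_antisymm ?_ ?_⟩
  · rcases hθ.1.eq_or_lt with h0 | h0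
    · subst h0
      refine sInf_le ⟨fun _ => 1, fun _ => 0, ⟨?_, ?_, ?_, ?_, tendsto_const_nhds⟩, ?_⟩
      · intro r _; norm_num
      · intro x _; simp
      · intro x _; simp
      · intro x _; simp
      · simp [energy1d, integrand]
    · have hs2 : 0 < Real.sin (θ / 2) :=
        Real.sin_pos_of_pos_of_lt_pi (by linarith) (by linarith [hθ.2, Real.pi_pos])
      have hc2 : 0 ≤ Real.cos (θ / 2) :=
        Real.cos_nonneg_of_mem_Icc ⟨by linarith [Real.pi_pos], by linarith [hθ.2]⟩
      have hcos : Real.cos θ = 1 - 2 / (1 + (Real.cos (θ / 2) / Real.sin (θ / 2)) ^ 2) := by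
        have h1 : Real.cos θ = 2 * Real.cos (θ / 2) ^ 2 - 1 := by
          rw [← Real.cos_two_mul]; congr 1; ring
        have h2 := Real.sin_sq_add_cos_sq (θ / 2)
        have h3 : 1 + (Real.cos (θ / 2) / Real.sin (θ / 2)) ^ 2 = 1 / Real.sin (θ / 2) ^ 2 := by
          field_simp
          linarith
        rw [h3, h1]
        field_simp
        linarith
      have ht : Tendsto (fun β : ℝ => ENNReal.ofReal
          (2 * sS * cS * (1 - Real.cos θ) + 8 * sS * cS * β ^ 2)) (nhdsWithin 0 (Ioi 0))
          (nhds (ENNReal.ofReal (2 * sS * cS * (1 - Real.cos θ)))) := by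
        apply ENNReal.tendsto_ofReal
        have : Continuous (fun β : ℝ =>
          2 * sS * cS * (1 - Real.cos θ) + 8 * sS * cS * β ^ 2) := by fun_prop
        have := (this.tendsto 0).mono_left (nhdsWithin_le_nhds (s := Ioi 0))
        simpa using this
      refine ge_of_tendsto ht ?_
      filter_upwards [self_mem_nhdsWithin] with β hβ
      obtain ⟨n, g, ha, he⟩ := aux_upper sS cS hsS hcS θ _ β (div_nonneg hc2 hs2.le) hβ hcos
      refine le_trans (sInf_le ?_) he
      exact ⟨n, g, ha, rfl⟩
  · refine le_sInf ?_
    rintro E ⟨n, g, ha, rfl⟩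
    exact hlow n g ha
end
end

section
/- There exist constants 𝔠 > 0 and δ₀ > 0 such that for every δ ∈ (0, δ₀) there is a constant C_δ > 0 with the following property. Let ℓ ⊂ ℝ³ be a line segment, let η, ξ satisfy 0 < ξ ≤ η² ≤ 1, let K > 0, and let Q ∈ H¹(ℓ, Sym₀) satisfy η·𝓔_{η,ξ}(Q, ℓ) ≤ K, where 𝓔_{η,ξ}(Q,ℓ) = ∫_ℓ (1/2)|Q'|² + (1/ξ²)f(Q) + (1/η²)g(Q) + C₀ (one-dimensional integral along ℓ, Q' the derivative along ℓ). Then there exists a measurable set I_δ ⊆ ℓ with H¹(ℓ ∖ I_δ) ≤ (K+1)·η / C_δ such that for every x ∈ I_δ the matrix Q(x) has a simple largest eigenvalue and its unit eigenvector n satisfies |n·e₃| ≥ 1 − 𝔠·√δ. -/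
/- STATEMENT 15: There exist 𝔠 > 0 and δ₀ > 0 such that for every δ ∈ (0,δ₀) there is
C_δ > 0 with: for every line segment ℓ (parametrized by arclength on [0,L]), every
0 < ξ ≤ η² ≤ 1, K > 0 and Q ∈ H¹(ℓ,Sym₀) with η·𝓔_{η,ξ}(Q,ℓ) ≤ K, there is a
measurable set I_δ ⊆ ℓ with H¹(ℓ∖I_δ) ≤ (K+1)η/C_δ such that for every x ∈ I_δ the
matrix Q(x) has a simple largest eigenvalue whose unit eigenvector n satisfies
|n·e₃| ≥ 1 − 𝔠√δ. The H¹ map Q is represented via its continuous representative and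
weak derivative G through the fundamental theorem of calculus. -/

noncomputable section

open Matrix MeasureTheory Metric Set Filter
open scoped ENNReal

/-- The one-dimensional energy 𝓔_{η,ξ}(Q,ℓ) of Q along the (arclength-parametrized)
segment, with weak derivative G. -/
def energySeg (a b c C ξ η L : ℝ) (Q G : ℝ → E9) : ℝ≥0∞ :=
  ∫⁻ t in Ioo (0 : ℝ) L,
    ENNReal.ofReal (1 / 2 * ‖G t‖ ^ 2 + 1 / ξ ^ 2 * fLdG a b c C (toM (Q t)) +
      1 / η ^ 2 * gMagE (sStar a b c) (Q t) + C0const a b c C ξ η)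


lemma spec3 (Q : Mat3) (h : Q.IsSymm) : ∃ (U : Mat3) (d : Fin 3 → ℝ),
    Uᵀ * U = 1 ∧ U * Uᵀ = 1 ∧ Q = U * diagonal d * Uᵀ := by
  have hH : Q.IsHermitian := by
    rw [Matrix.IsHermitian, Matrix.conjTranspose_eq_transpose_of_trivial]; exact h
  refine ⟨(hH.eigenvectorUnitary : Mat3), hH.eigenvalues, ?_, ?_, ?_⟩
  · have := Unitary.coe_star_mul_self hH.eigenvectorUnitary
    rwa [Matrix.star_eq_conjTranspose, Matrix.conjTranspose_eq_transpose_of_trivial] at this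
  · have := Unitary.coe_mul_star_self hH.eigenvectorUnitary
    rwa [Unitary.coe_star, Matrix.star_eq_conjTranspose, Matrix.conjTranspose_eq_transpose_of_trivial] at this
  · have := hH.spectral_theorem
    rw [Unitary.conjStarAlgAut_apply, Matrix.star_eq_conjTranspose,
      Matrix.conjTranspose_eq_transpose_of_trivial] at this
    exact this

lemma trace_ineq (Q : Mat3) (h : Q.IsSymm) (ht : Q.trace = 0) (s : ℝ) (hs : 0 ≤ s)
    (hr : (Q * Q).trace = 2 / 3 * s ^ 2) : (Q * Q * Q).trace ≤ 2 / 9 * s ^ 3 := by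
  obtain ⟨U, d, h1, h2, h3⟩ := spec3 Q h
  have e2 : Q * Q = U * (diagonal d * diagonal d) * Uᵀ := by
    rw [h3]
    calc _ = U * diagonal d * (Uᵀ * U) * diagonal d * Uᵀ := by simp only [Matrix.mul_assoc]
      _ = _ := by rw [h1]; simp only [Matrix.mul_assoc, Matrix.one_mul]
  have e3 : Q * Q * Q = U * (diagonal d * diagonal d * diagonal d) * Uᵀ := by
    rw [e2]; nth_rw 1 [h3]
    calc _ = U * (diagonal d * diagonal d) * (Uᵀ * U) * diagonal d * Uᵀ := by
          simp only [Matrix.mul_assoc]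
      _ = _ := by rw [h1]; simp only [Matrix.mul_assoc, Matrix.one_mul]
  have tr : ∀ D : Mat3, (U * D * Uᵀ).trace = D.trace := by
    intro D
    rw [Matrix.trace_mul_comm, ← Matrix.mul_assoc, h1, Matrix.one_mul]
  rw [e3, tr]
  rw [e2, tr] at hr
  rw [h3, tr] at ht
  simp only [diagonal_mul_diagonal, trace_diagonal, Fin.sum_univ_three] at *
  have hd : d 2 = - d 0 - d 1 := by linarith
  rw [hd] at hr ⊢
  apply le_of_sq_le_sq _ (by positivity)
  have : (2 / 9 * s ^ 3)^2 = 1/6 * (2 / 3 * s ^ 2)^3 := by ring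
  rw [this, ← hr]
  nlinarith [sq_nonneg ((d 0 - d 1) * (d 0 + 2 * d 1) * (2 * d 0 + d 1))]

lemma quad_le_s15 (Q : Mat3) (h : Q.IsSymm) : ∃ (lam : ℝ) (n : Fin 3 → ℝ), unitVec n ∧ 
    IsEigen Q lam n ∧ ∀ x : Fin 3 → ℝ, x ⬝ᵥ (Q *ᵥ x) ≤ lam * (x ⬝ᵥ x) := by
  obtain ⟨U, d, h1, h2, h3⟩ := spec3 Q h
  obtain ⟨i, hi⟩ := Finite.exists_max d
  refine ⟨d i, fun j => U j i, ?_, ?_, ?_⟩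
  · have := congrFun (congrFun h1 i) i
    simp only [mul_apply, transpose_apply, one_apply_eq] at this
    unfold unitVec
    rw [← this]
    exact Finset.sum_congr rfl fun j _ => by ring
  · unfold IsEigen
    have e : (fun j => U j i) = U *ᵥ (Pi.single i 1) := by
      ext j; simp
    have e2 : Q * U = U * diagonal d := by
      rw [h3, Matrix.mul_assoc, h1, Matrix.mul_one]
    rw [e, mulVec_mulVec, e2, ← mulVec_mulVec, ← mulVec_smul]
    congr 1
    ext j
    rw [mulVec_diagonal]
    by_cases hj : j = i
    · subst hj; simp
    · simp [hj]
  · intro x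
    set w := Uᵀ *ᵥ x with hw
    have e1 : x ⬝ᵥ (Q *ᵥ x) = w ⬝ᵥ (diagonal d *ᵥ w) := by
      rw [h3, ← mulVec_mulVec, ← mulVec_mulVec, ← hw, dotProduct_mulVec, ← mulVec_transpose]
    have e2 : x ⬝ᵥ x = w ⬝ᵥ w := by
      conv_rhs => rw [hw, dotProduct_mulVec, ← mulVec_transpose, transpose_transpose, mulVec_mulVec, h2, one_mulVec]
    rw [e1, e2]
    simp only [dotProduct, mulVec_diagonal, Finset.mul_sum]
    apply Finset.sum_le_sum
    intro j _
    nlinarith [hi j, mul_self_nonneg (w j)]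

lemma eig_main (Q : Mat3) (h : Q.IsSymm) (s ω : ℝ) (hs : 0 < s) (hω : 0 ≤ ω) (hω1 : 2 * ω < 1)
    (hE : ∑ p : Fin 3 × Fin 3, ((Q - diagonal ![-s/3, -s/3, 2*s/3]) p.1 p.2) ^ 2 ≤ (ω * s) ^ 2) :
    ∃ (lam : ℝ) (n : Fin 3 → ℝ), SimpleMaxEigen Q lam n ∧ 1 - 2 * ω ≤ |n 2| := by
  obtain ⟨lam, n, hn, he, hq⟩ := quad_le_s15 Q h
  set E := Q - diagonal ![-s/3, -s/3, 2*s/3] with hEd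
  have hQE : Q = E + diagonal ![-s/3, -s/3, 2*s/3] := by rw [hEd]; abel
  have h33 : -(ω * s) ≤ E 2 2 := by
    have h0 : (E 2 2)^2 ≤ (ω * s)^2 := by
      refine le_trans ?_ hE
      exact Finset.single_le_sum (f := fun p : Fin 3 × Fin 3 => (E p.1 p.2)^2)
        (fun p _ => sq_nonneg _) (Finset.mem_univ ((2 : Fin 3), (2 : Fin 3)))
    exact (abs_le_of_sq_le_sq' h0 (by positivity)).1
  have hlam : 2 / 3 * s - ω * s ≤ lam := by
    have := hq (Pi.single 2 1)
    rw [hQE] at this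
    simp at this
    linarith
  have hquad : ∀ x : Fin 3 → ℝ, x ⬝ᵥ (Q *ᵥ x) ≤ s * (x 2)^2 - s / 3 * (x ⬝ᵥ x) + ω * s * (x ⬝ᵥ x) := by
    intro x
    have hxx : 0 ≤ x ⬝ᵥ x := by
      simp only [dotProduct]; exact Finset.sum_nonneg fun i _ => mul_self_nonneg _
    have hcs : x ⬝ᵥ (E *ᵥ x) ≤ ω * s * (x ⬝ᵥ x) := by
      apply le_of_sq_le_sq _ (by positivity)
      have c := Finset.sum_mul_sq_le_sq_mul_sq Finset.univ (fun p : Fin 3 × Fin 3 => E p.1 p.2)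
        (fun p => x p.1 * x p.2)
      have c1 : x ⬝ᵥ (E *ᵥ x) = ∑ p : Fin 3 × Fin 3, E p.1 p.2 * (x p.1 * x p.2) := by
        simp only [dotProduct, mulVec, Fintype.sum_prod_type, Fin.sum_univ_three]; ring
      have c2 : ∑ p : Fin 3 × Fin 3, (x p.1 * x p.2)^2 = (x ⬝ᵥ x)^2 := by
        simp only [dotProduct, Fintype.sum_prod_type, Fin.sum_univ_three]; ring
      rw [c1, mul_pow, ← c2]
      exact c.trans (mul_le_mul_of_nonneg_right hE (Finset.sum_nonneg fun i _ => sq_nonneg _))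
    have : x ⬝ᵥ (Q *ᵥ x) = x ⬝ᵥ (E *ᵥ x) + (s * (x 2)^2 - s / 3 * (x ⬝ᵥ x)) := by
      conv_lhs => rw [hQE, add_mulVec, dotProduct_add]
      congr 1
      simp [dotProduct, mulVec_diagonal, Fin.sum_univ_three]; ring
    linarith
  have hev : ∀ v : Fin 3 → ℝ, IsEigen Q lam v → (1 - 2 * ω) * (v ⬝ᵥ v) ≤ (v 2)^2 := by
    intro v hv
    have h1 := hquad v
    rw [show Q *ᵥ v = lam • v from hv, dotProduct_smul, smul_eq_mul] at h1
    have hxx : 0 ≤ v ⬝ᵥ v := by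
      simp only [dotProduct]; exact Finset.sum_nonneg fun i _ => mul_self_nonneg _
    have h2 := mul_le_mul_of_nonneg_right hlam hxx
    have : s * ((1 - 2 * ω) * (v ⬝ᵥ v)) ≤ s * (v 2)^2 := by nlinarith
    exact le_of_mul_le_mul_left this hs
  have hnn : n ⬝ᵥ n = 1 := by
    rw [← hn]; simp only [dotProduct]; exact Finset.sum_congr rfl fun j _ => by ring
  have hn2 := hev n he
  rw [hnn, mul_one] at hn2
  have hn20 : n 2 ≠ 0 := by intro h0; rw [h0] at hn2; linarith
  refine ⟨lam, n, ⟨⟨hn, he, ?_⟩, ?_⟩, ?_⟩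
  · intro μ v hv0 hv
    have := hq v
    rw [show Q *ᵥ v = μ • v from hv, dotProduct_smul, smul_eq_mul] at this
    have hp : 0 < v ⬝ᵥ v := by
      have hxx : 0 ≤ v ⬝ᵥ v := by
        simp only [dotProduct]; exact Finset.sum_nonneg fun i _ => mul_self_nonneg _
      exact lt_of_le_of_ne hxx (fun h => hv0 (dotProduct_self_eq_zero.1 h.symm))
    exact le_of_mul_le_mul_right this hp
  · intro v hv
    have hw : IsEigen Q lam (n 2 • v - v 2 • n) := by
      unfold IsEigen at *
      rw [mulVec_sub, mulVec_smul, mulVec_smul, hv, he, smul_sub, smul_comm lam, smul_comm lam]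
    have h1 := hev _ hw
    have h2 : (n 2 • v - v 2 • n) 2 = 0 := by simp; ring
    rw [h2] at h1
    have hxx : 0 ≤ (n 2 • v - v 2 • n) ⬝ᵥ (n 2 • v - v 2 • n) := by
      simp only [dotProduct]; exact Finset.sum_nonneg fun i _ => mul_self_nonneg _
    have h3 : n 2 • v - v 2 • n = 0 := by
      apply dotProduct_self_eq_zero.1
      nlinarith
    refine ⟨v 2 / n 2, ?_⟩
    ext j
    have := congrFun h3 j
    simp at this ⊢
    field_simp
    linarith
  · have : |n 2| ≤ 1 := by
      rw [← sq_le_one_iff_abs_le_one]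
      have := hn
      unfold unitVec at this
      rw [Fin.sum_univ_three] at this
      nlinarith [sq_nonneg (n 0), sq_nonneg (n 1)]
    have h5 : (n 2)^2 = |n 2| * |n 2| := by rw [← sq, sq_abs]
    nlinarith [abs_nonneg (n 2)]

def phiU (a b c C s : ℝ) : ℝ := C - a / 3 * s ^ 2 - 2 * b / 27 * s ^ 3 + c / 9 * s ^ 4

def uniE (s : ℝ) : E9 := WithLp.toLp 2 fun p => diagonal ![-s/3, -s/3, 2*s/3] p.1 p.2

lemma toM_uniE (s : ℝ) : toM (uniE s) = diagonal ![-s/3, -s/3, 2*s/3] := by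
  ext i j; simp [toM, uniE]

lemma uniE_mem (s : ℝ) : uniE s ∈ Sym0E := by
  constructor
  · rw [toM_uniE]; exact isSymm_diagonal _
  · rw [toM_uniE]; simp [trace_diagonal, Fin.sum_univ_three]; ring

lemma f_uniE (a b c C s : ℝ) : fLdG a b c C (toM (uniE s)) = phiU a b c C s := by
  rw [toM_uniE]
  simp only [fLdG, phiU, diagonal_mul_diagonal, trace_diagonal, Fin.sum_univ_three]
  simp
  ring

lemma g_uniE (S s : ℝ) : gMagE S (uniE s) = 2 / 3 * (S - s) := by
  simp [gMagE, uniE]; ring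

lemma f_ge (a b c C : ℝ) (hb : 0 < b) (Q : Mat3) (h : Q.IsSymm) (ht : Q.trace = 0) (s : ℝ)
    (hs : 0 ≤ s) (hr : (Q * Q).trace = 2 / 3 * s ^ 2) : phiU a b c C s ≤ fLdG a b c C Q := by
  have := trace_ineq Q h ht s hs hr
  unfold phiU fLdG
  rw [hr]
  nlinarith

lemma exists_s (Q : Mat3) (h : Q.IsSymm) : ∃ s : ℝ, 0 ≤ s ∧ (Q * Q).trace = 2 / 3 * s ^ 2 := by
  have hn : 0 ≤ (Q * Q).trace := by
    have : (Q * Q).trace = ∑ i, ∑ j, Q i j ^ 2 := by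
      simp only [trace, diag_apply, mul_apply]
      refine Finset.sum_congr rfl fun i _ => Finset.sum_congr rfl fun j _ => ?_
      rw [h.apply i j]; ring
    rw [this]
    positivity
  refine ⟨Real.sqrt (3 / 2 * (Q * Q).trace), Real.sqrt_nonneg _, ?_⟩
  rw [Real.sq_sqrt (by positivity)]; ring

lemma tr_expand (Q : Mat3) (h : Q.IsSymm) : (Q * Q).trace =
    Q 0 0 ^ 2 + Q 1 1 ^ 2 + Q 2 2 ^ 2 + 2 * (Q 0 1 ^ 2 + Q 0 2 ^ 2 + Q 1 2 ^ 2) := by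
  simp only [trace, diag_apply, mul_apply, Fin.sum_univ_three]
  rw [h.apply 0 1, h.apply 0 2, h.apply 1 2]; ring

lemma q33_le (Q : Mat3) (h : Q.IsSymm) (ht : Q.trace = 0) (s : ℝ)
    (hs : 0 ≤ s) (hr : (Q * Q).trace = 2 / 3 * s ^ 2) : Q 2 2 ≤ 2 / 3 * s := by
  rw [tr_expand Q h] at hr
  simp only [trace, diag_apply, Fin.sum_univ_three] at ht
  apply le_of_sq_le_sq _ (by positivity)
  have : Q 2 2 = - Q 0 0 - Q 1 1 := by linarith
  rw [this] at hr ⊢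
  nlinarith [sq_nonneg (Q 0 0 - Q 1 1), sq_nonneg (Q 0 1), sq_nonneg (Q 0 2), sq_nonneg (Q 1 2)]

lemma frob (Q : Mat3) (h : Q.IsSymm) (ht : Q.trace = 0) (s : ℝ)
    (hr : (Q * Q).trace = 2 / 3 * s ^ 2) :
    ∑ p : Fin 3 × Fin 3, ((Q - diagonal ![-s/3, -s/3, 2*s/3]) p.1 p.2) ^ 2
      = 2 * s * (2 / 3 * s - Q 2 2) := by
  rw [tr_expand Q h] at hr
  simp only [trace, diag_apply, Fin.sum_univ_three] at ht
  have : Q 0 0 = - Q 1 1 - Q 2 2 := by linarith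
  simp [Fintype.sum_prod_type, Fin.sum_univ_three, diagonal_apply]
  rw [h.apply 0 1, h.apply 0 2, h.apply 1 2]
  rw [this] at hr ⊢
  linear_combination hr

lemma sStar_spec (a b c : ℝ) (ha : 0 < a) (hb : 0 < b) (hc : 0 < c) :
    0 < sStar a b c ∧ 2 * c * sStar a b c ^ 2 = b * sStar a b c + 3 * a := by
  have h : 0 ≤ b ^ 2 + 24 * a * c := by positivity
  have h2 := Real.sq_sqrt h
  unfold sStar
  refine ⟨by positivity, ?_⟩
  generalize Real.sqrt (b ^ 2 + 24 * a * c) = r at *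
  field_simp
  linear_combination 2 * h2

lemma phi_diff (a b c C : ℝ) (ha : 0 < a) (hb : 0 < b) (hc : 0 < c) :
    ∃ γ > 0, ∀ s, 0 ≤ s →
      γ * (s - sStar a b c) ^ 2 ≤ phiU a b c C s - phiU a b c C (sStar a b c) := by
  obtain ⟨h1, h2⟩ := sStar_spec a b c ha hb hc
  set S := sStar a b c
  have hβ : 0 < 3 * c * S - b := by
    have : 0 < S * (2 * c * S - b) := by nlinarith
    have := pos_of_mul_pos_right this h1.le
    nlinarith [mul_pos hc h1]
  refine ⟨(3 * c * S - b) / 27 * S, by positivity, ?_⟩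
  intro s hs
  have e : phiU a b c C s - phiU a b c C S =
    (s - S)^2 * (c / 9 * s^2 + 2 / 27 * (3 * c * S - b) * s + (3 * c * S - b) / 27 * S) := by
    have : a = (2 * c * S ^ 2 - b * S) / 3 := by linarith
    unfold phiU; rw [this]; ring
  rw [e]
  have : 0 ≤ (s - S)^2 * (c / 9 * s^2 + 2 / 27 * (3 * c * S - b) * s) := by positivity
  nlinarith

lemma phi_star (a b c C : ℝ) (ha : 0 < a) (hb : 0 < b) (hc : 0 < c)
    (hC : IsLeast ((fun A => fLdG a b c C (toM A)) '' Sym0E) 0) :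
    phiU a b c C (sStar a b c) = 0 := by
  obtain ⟨⟨A, hA, hA0⟩, hlb⟩ := hC
  have h1 : 0 ≤ phiU a b c C (sStar a b c) := by
    rw [← f_uniE]; exact hlb ⟨_, uniE_mem _, rfl⟩
  obtain ⟨s, hs, hr⟩ := exists_s _ hA.1
  have h2 := f_ge a b c C hb _ hA.1 hA.2 s hs hr
  obtain ⟨γ, hγ, h3⟩ := phi_diff a b c C ha hb hc
  have h4 := h3 s hs
  have : 0 ≤ γ * (s - sStar a b c) ^ 2 := by positivity
  simp only at hA0
  linarith

lemma C0_ge (a b c C : ℝ) (ha : 0 < a) (hb : 0 < b) (hc : 0 < c)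
    (hC : IsLeast ((fun A => fLdG a b c C (toM A)) '' Sym0E) 0) (ξ η : ℝ) (hξ : 0 < ξ)
    (hη : 0 < η) (s : ℝ) :
    0 ≤ 1 / ξ ^ 2 * phiU a b c C s + 1 / η ^ 2 * (2 / 3 * (sStar a b c - s))
      + C0const a b c C ξ η := by
  have hst := phi_star a b c C ha hb hc hC
  obtain ⟨γ, hγ, h3⟩ := phi_diff a b c C ha hb hc
  have : sInf {v | ∃ P ∈ Sym0E,
    v = 1 / ξ ^ 2 * fLdG a b c C (toM P) + 1 / η ^ 2 * gMagE (sStar a b c) P} ≤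
      1 / ξ ^ 2 * phiU a b c C s + 1 / η ^ 2 * (2 / 3 * (sStar a b c - s)) := by
    apply csInf_le
    · set α := 1 / ξ ^ 2 * γ with hα
      set β := 1 / η ^ 2 * (2 / 3) with hβ
      have hα0 : 0 < α := by positivity
      refine ⟨- (β ^ 2 / (4 * α)), ?_⟩
      rintro v ⟨P, hP, rfl⟩
      obtain ⟨r, hs, hr⟩ := exists_s _ hP.1
      have h2 := f_ge a b c C hb _ hP.1 hP.2 r hs hr
      have h5 := q33_le _ hP.1 hP.2 r hs hr
      have h4 := h3 r hs
      rw [hst, sub_zero] at h4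
      have h6 : α * (r - sStar a b c) ^ 2 ≤ 1 / ξ ^ 2 * fLdG a b c C (toM P) := by
        rw [hα, mul_assoc]
        exact mul_le_mul_of_nonneg_left (h4.trans h2) (by positivity)
      have h7 : β * (sStar a b c - r) ≤ 1 / η ^ 2 * gMagE (sStar a b c) P := by
        rw [hβ, mul_assoc]
        refine mul_le_mul_of_nonneg_left ?_ (by positivity)
        have : toM P 2 2 = P (2, 2) := rfl
        unfold gMagE
        linarith
      have h8 : - (β ^ 2 / (4 * α)) ≤ α * (r - sStar a b c) ^ 2 + β * (sStar a b c - r) := by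
        have : α * (r - sStar a b c) ^ 2 + β * (sStar a b c - r) + β ^ 2 / (4 * α) =
          (2 * α * (r - sStar a b c) - β)^2 / (4 * α) := by field_simp; ring
        have h9 : 0 ≤ (2 * α * (r - sStar a b c) - β)^2 / (4 * α) := by positivity
        linarith
      linarith
    · exact ⟨uniE s, uniE_mem s, by rw [f_uniE, g_uniE]⟩
  unfold C0const
  linarith

lemma pointwise (a b c C : ℝ) (ha : 0 < a) (hb : 0 < b) (hc : 0 < c)
    (hC : IsLeast ((fun A => fLdG a b c C (toM A)) '' Sym0E) 0) (ξ η : ℝ) (hξ : 0 < ξ)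
    (hη : 0 < η) (δ : ℝ) (hδ : 0 < δ) (hδ1 : δ < 1 / 5) (A : E9) (hA : A ∈ Sym0E)
    (hF : 1 / ξ ^ 2 * fLdG a b c C (toM A) + 1 / η ^ 2 * gMagE (sStar a b c) A
      + C0const a b c C ξ η < (δ * sStar a b c / 4) / η ^ 2) :
    ∃ (lam : ℝ) (n : Fin 3 → ℝ),
      SimpleMaxEigen (toM A) lam n ∧ 1 - 2 * Real.sqrt δ ≤ |n 2| := by
  obtain ⟨hS, -⟩ := sStar_spec a b c ha hb hc
  have hst := phi_star a b c C ha hb hc hC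
  obtain ⟨s, hs, hr⟩ := exists_s _ hA.1
  have h2 := f_ge a b c C hb _ hA.1 hA.2 s hs hr
  have h5 := q33_le _ hA.1 hA.2 s hs hr
  have hfr := frob _ hA.1 hA.2 s hr
  have c1 := C0_ge a b c C ha hb hc hC ξ η hξ hη s
  have c2 := C0_ge a b c C ha hb hc hC ξ η hξ hη (sStar a b c)
  rw [hst, sub_self, mul_zero, mul_zero, mul_zero] at c2
  have hf0 : 0 ≤ fLdG a b c C (toM A) := hC.2 ⟨A, hA, rfl⟩
  set S := sStar a b c
  have hq : toM A 2 2 = A (2, 2) := rfl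
  have hη2 : 0 < 1 / η ^ 2 := by positivity
  have hξ2 : 0 ≤ 1 / ξ ^ 2 := by positivity
  have hg : gMagE S A = 2 / 3 * S - A (2, 2) := rfl
  have k1 : 2 / 3 * S - A (2, 2) < δ * S / 4 := by
    have : 1 / η ^ 2 * (2 / 3 * S - A (2, 2)) < 1 / η ^ 2 * (δ * S / 4) := by
      rw [← hg, one_div_mul_eq_div _ (δ * S / 4)]
      nlinarith [mul_nonneg hξ2 hf0]
    exact lt_of_mul_lt_mul_left this hη2.le
  have k2 : 2 / 3 * s - A (2, 2) < δ * S / 4 := by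
    have : 1 / η ^ 2 * (2 / 3 * s - A (2, 2)) < 1 / η ^ 2 * (δ * S / 4) := by
      rw [one_div_mul_eq_div _ (δ * S / 4)]
      rw [hg] at hF
      nlinarith [mul_le_mul_of_nonneg_left h2 hξ2]
    exact lt_of_mul_lt_mul_left this hη2.le
  rw [hq] at h5 hfr
  have hδS : δ * S < 1 / 5 * S := mul_lt_mul_of_pos_right hδ1 hS
  have hsS : S / 2 < s := by linarith
  have hs0 : 0 < s := by linarith
  have hsq : Real.sqrt δ < 1 / 2 := by
    rw [Real.sqrt_lt' (by norm_num)]; linarith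
  refine eig_main _ hA.1 s (Real.sqrt δ) hs0 (Real.sqrt_nonneg _) (by linarith) ?_
  rw [hfr, mul_pow, Real.sq_sqrt hδ.le]
  have : 2 * s * (2 / 3 * s - A (2, 2)) ≤ 2 * s * (δ * S / 4) :=
    mul_le_mul_of_nonneg_left k2.le (by positivity)
  have h9 : δ * s * (S / 2) ≤ δ * s * s := mul_le_mul_of_nonneg_left hsS.le (by positivity)
  nlinarith

theorem statement15 (a b c C : ℝ) (ha : 0 < a) (hb : 0 < b) (hc : 0 < c)
    (hC : IsLeast ((fun A => fLdG a b c C (toM A)) '' Sym0E) 0) :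
    ∃ 𝔠 > (0 : ℝ), ∃ δ₀ > (0 : ℝ), ∀ δ : ℝ, 0 < δ → δ < δ₀ →
      ∃ Cδ > (0 : ℝ), ∀ L : ℝ, 0 < L → ∀ η ξ K : ℝ, 0 < η →
        0 < ξ → ξ ≤ η ^ 2 → η ^ 2 ≤ 1 → 0 < K →
        ∀ Q G : ℝ → E9,
          (∀ t ∈ Icc 0 L, Q t ∈ Sym0E) →
          IntegrableOn G (Icc 0 L) →
          IntegrableOn (fun t => ‖G t‖ ^ 2) (Icc 0 L) →
          (∀ x ∈ Icc 0 L, Q x = Q 0 + ∫ t in (0 : ℝ)..x, G t) →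
          ENNReal.ofReal η * energySeg a b c C ξ η L Q G ≤ ENNReal.ofReal K →
          ∃ Iδ : Set ℝ, MeasurableSet Iδ ∧ Iδ ⊆ Icc 0 L ∧
            volume (Icc 0 L \ Iδ) ≤ ENNReal.ofReal ((K + 1) / Cδ * η) ∧
            ∀ t ∈ Iδ, ∃ (lam : ℝ) (n : Fin 3 → ℝ),
              SimpleMaxEigen (toM (Q t)) lam n ∧ 1 - 𝔠 * Real.sqrt δ ≤ |n 2| := by
  obtain ⟨hS, -⟩ := sStar_spec a b c ha hb hc
  refine ⟨2, by norm_num, 1 / 5, by norm_num, ?_⟩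
  intro δ hδ hδ1
  refine ⟨δ * sStar a b c / 4, by positivity, ?_⟩
  intro L hL η ξ K hη hξ _ _ hK Q G hQ hG hG2 hFTC hE
  set m := δ * sStar a b c / 4 with hm
  have hm0 : 0 < m := by positivity
  set F : E9 → ℝ := fun A => 1 / ξ ^ 2 * fLdG a b c C (toM A) + 1 / η ^ 2 * gMagE (sStar a b c) A
      + C0const a b c C ξ η with hFdef
  have hFc : Continuous F := by
    have hT : Continuous toM := by
      unfold toM
      exact continuous_matrix fun i j => by simp only [of_apply]; fun_prop
    have hf : Continuous fun A => fLdG a b c C (toM A) := by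
      unfold fLdG
      have h2 : Continuous fun A => toM A * toM A := hT.matrix_mul hT
      have h3 : Continuous fun A => toM A * toM A * toM A := h2.matrix_mul hT
      have t2 := h2.matrix_trace
      have t3 := h3.matrix_trace
      fun_prop
    have hg : Continuous (gMagE (sStar a b c)) := by
      unfold gMagE; fun_prop
    rw [hFdef]; fun_prop
  have hQc : ContinuousOn Q (Icc 0 L) := by
    have h1 : ContinuousOn (fun x => Q 0 + ∫ t in (0 : ℝ)..x, G t) (Icc 0 L) := by
      apply ContinuousOn.add continuousOn_const
      have := intervalIntegral.continuousOn_primitive_interval (a := 0) (b := L) (f := G)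
        (μ := volume) (by rwa [uIcc_of_le hL.le])
      rwa [uIcc_of_le hL.le] at this
    exact h1.congr hFTC
  have hFQ : ContinuousOn (fun t => F (Q t)) (Ioo 0 L) :=
    hFc.comp_continuousOn (hQc.mono Ioo_subset_Icc_self)
  set I : Set ℝ := Ioo 0 L ∩ (fun t => F (Q t)) ⁻¹' (Iio (m / η ^ 2)) with hI
  have hIo : MeasurableSet I := (hFQ.isOpen_inter_preimage isOpen_Ioo isOpen_Iio).measurableSet
  refine ⟨I, hIo, fun t ht => Ioo_subset_Icc_self ht.1, ?_, ?_⟩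
  · set B : Set ℝ := Ioo 0 L \ I with hB
    have hBm : MeasurableSet B := measurableSet_Ioo.diff hIo
    have hsub : Icc 0 L \ I ⊆ B ∪ {0, L} := by
      rintro t ⟨⟨h1, h2⟩, h3⟩
      by_cases h0 : t = 0
      · right; simp [h0]
      by_cases h0' : t = L
      · right; simp [h0']
      left
      exact ⟨⟨lt_of_le_of_ne h1 (Ne.symm h0), lt_of_le_of_ne h2 h0'⟩, h3⟩
    have hv : volume (Icc 0 L \ I) ≤ volume B := by
      refine (measure_mono hsub).trans ((measure_union_le _ _).trans ?_)
      rw [(Set.toFinite ({0, L} : Set ℝ)).measure_zero volume, add_zero]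
    refine hv.trans ?_
    have hen : ENNReal.ofReal (m / η ^ 2) * volume B ≤ energySeg a b c C ξ η L Q G := by
      rw [← setLIntegral_const]
      unfold energySeg
      refine (setLIntegral_mono' hBm ?_).trans (lintegral_mono_set sdiff_subset)
      intro t ht
      apply ENNReal.ofReal_le_ofReal
      have h1 : m / η ^ 2 ≤ F (Q t) := by
        by_contra hcon
        exact ht.2 ⟨ht.1, not_le.1 hcon⟩
      have h2 : 0 ≤ 1 / 2 * ‖G t‖ ^ 2 := by positivity
      simp only [hFdef] at h1
      linarith
    have h3 : ENNReal.ofReal (m / η) * volume B ≤ ENNReal.ofReal K := by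
      refine le_trans (le_of_eq ?_) ((mul_le_mul_right hen (ENNReal.ofReal η)).trans hE)
      rw [← mul_assoc, ← ENNReal.ofReal_mul hη.le]
      congr 2
      field_simp
    have h4 : volume B ≤ ENNReal.ofReal K / ENNReal.ofReal (m / η) := by
      rw [ENNReal.le_div_iff_mul_le (Or.inl (by simp; positivity)) (Or.inl ENNReal.ofReal_ne_top),
        mul_comm]
      exact h3
    refine h4.trans ?_
    rw [← ENNReal.ofReal_div_of_pos (by positivity)]
    apply ENNReal.ofReal_le_ofReal
    rw [div_div_eq_mul_div, div_mul_eq_mul_div]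
    gcongr
    linarith
  · intro t ht
    exact pointwise a b c C ha hb hc hC ξ η hξ hη δ hδ hδ1 (Q t)
      (hQ t (Ioo_subset_Icc_self ht.1)) ht.2
end
end

section
/- A matrix Q ∈ Sym₀ belongs to 𝒯 if and only if there exist λ > 0, a unit vector n = (n₁, n₂, 0) ∈ ℝ³, and a symmetric 2×2 real matrix M' with tr(M') = 1 and ⟨M'v, v⟩ > −1 for all unit vectors v ∈ ℝ², such that Q = λ( n⊗n − Rₙᵀ M Rₙ ), where M is the 3×3 symmetric matrix whose upper-left 2×2 block is M' and whose third row and column vanish, and Rₙ is the rotation matrix Rₙ = [[n₂², −n₁n₂, −n₁], [−n₁n₂, n₁², −n₂], [n₁, n₂, 0]] (the rotation about the axis n×e₃ taking n to e₃). Moreover, such a Q is uniaxial, i.e. Q = s( m⊗m − (1/3)I ) for some s > 0 and unit vector m, if and only if M' = (1/2)·Id₂. -/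
/- STATEMENT 16: Q ∈ Sym₀ belongs to 𝒯 iff Q = λ(n⊗n − RₙᵀMRₙ) for some λ > 0, unit
n = (n₁,n₂,0), and symmetric 2×2 M' with tr M' = 1 and ⟨M'v,v⟩ > −1 for unit v, where
M has upper-left block M' and vanishing third row/column, and
Rₙ = [[n₂²,−n₁n₂,−n₁],[−n₁n₂,n₁²,−n₂],[n₁,n₂,0]]. Moreover such a Q is uniaxial
iff M' = ½·Id₂. -/

noncomputable section

open Matrix

def Sym0 : Set Mat3 := {Q | Q.IsSymm ∧ Q.trace = 0}

/-- 𝒯 ⊂ Sym₀. -/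
def TsetM : Set Mat3 :=
  {Q | Q ∈ Sym0 ∧ Q ≠ 0 ∧
    ∃ (lam : ℝ) (n : Fin 3 → ℝ), SimpleMaxEigen Q lam n ∧ n 2 = 0}

/-- The rotation about n × e₃ taking n = (n₁,n₂,0) to e₃. -/
def Rn (n₁ n₂ : ℝ) : Mat3 :=
  !![n₂ ^ 2, -(n₁ * n₂), -n₁; -(n₁ * n₂), n₁ ^ 2, -n₂; n₁, n₂, 0]

/-- The 3×3 matrix with upper-left 2×2 block [[m11,m12],[m12,m22]] and vanishing third
row and column. -/
def Mmat (m11 m12 m22 : ℝ) : Mat3 := !![m11, m12, 0; m12, m22, 0; 0, 0, 0]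

/-- ⟨M'v,v⟩ > −1 for all unit v ∈ ℝ². -/
def MprimeCond (m11 m12 m22 : ℝ) : Prop :=
  ∀ v₁ v₂ : ℝ, v₁ ^ 2 + v₂ ^ 2 = 1 →
    -1 < m11 * v₁ ^ 2 + 2 * m12 * v₁ * v₂ + m22 * v₂ ^ 2

/-- The parametrized matrix λ(n⊗n − RₙᵀMRₙ). -/
def Tparam (lam n₁ n₂ m11 m12 m22 : ℝ) : Mat3 :=
  lam • (Matrix.vecMulVec ![n₁, n₂, 0] ![n₁, n₂, 0] -
    (Rn n₁ n₂)ᵀ * Mmat m11 m12 m22 * Rn n₁ n₂)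

def Dm (l m11 m12 m22 : ℝ) : Mat3 :=
  !![-(l * m11), -(l * m12), 0; -(l * m12), -(l * m22), 0; 0, 0, l]

lemma Tparam_eq (l a b m11 m12 m22 : ℝ) :
    Tparam l a b m11 m12 m22 = (Rn a b)ᵀ * Dm l m11 m12 m22 * Rn a b := by
  ext i j
  fin_cases i <;> fin_cases j <;>
    simp [Tparam, Rn, Dm, Mmat, Matrix.mul_apply, Fin.sum_univ_three, Matrix.vecMulVec_apply] <;>
    ring

lemma R_RT (a b : ℝ) (h : a ^ 2 + b ^ 2 = 1) : Rn a b * (Rn a b)ᵀ = 1 := by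
  have hb : b ^ 2 = 1 - a ^ 2 := by linarith
  ext i j
  fin_cases i <;> fin_cases j <;>
    simp [Rn, Matrix.mul_apply, Fin.sum_univ_three] <;> grind

lemma RT_R (a b : ℝ) (h : a ^ 2 + b ^ 2 = 1) : (Rn a b)ᵀ * Rn a b = 1 :=
  mul_eq_one_comm.mp (R_RT a b h)

lemma conj_of (a b : ℝ) (h : a ^ 2 + b ^ 2 = 1) (Q D : Mat3)
    (hQ : Q = (Rn a b)ᵀ * D * Rn a b) : Rn a b * Q * (Rn a b)ᵀ = D := by
  rw [hQ]
  calc _ = (Rn a b * (Rn a b)ᵀ) * D * (Rn a b * (Rn a b)ᵀ) := by simp only [Matrix.mul_assoc]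
    _ = D := by rw [R_RT a b h]; simp

lemma of_conj (a b : ℝ) (h : a ^ 2 + b ^ 2 = 1) (Q D : Mat3)
    (hQ : Rn a b * Q * (Rn a b)ᵀ = D) : Q = (Rn a b)ᵀ * D * Rn a b := by
  rw [← hQ]
  calc Q = ((Rn a b)ᵀ * Rn a b) * Q * ((Rn a b)ᵀ * Rn a b) := by rw [RT_R a b h]; simp
    _ = _ := by simp only [Matrix.mul_assoc]

lemma eig_fwd (a b : ℝ) (h : a ^ 2 + b ^ 2 = 1) (Q D : Mat3)
    (hQ : Q = (Rn a b)ᵀ * D * Rn a b) (μ : ℝ) (v : Fin 3 → ℝ) (hv : IsEigen Q μ v) :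
    IsEigen D μ (Rn a b *ᵥ v) := by
  unfold IsEigen at *
  have : D * Rn a b = Rn a b * Q := by
    rw [hQ, ← Matrix.mul_assoc, ← Matrix.mul_assoc, R_RT a b h, Matrix.one_mul]
  rw [Matrix.mulVec_mulVec, this, ← Matrix.mulVec_mulVec, hv, Matrix.mulVec_smul]

lemma eig_bwd (a b : ℝ) (h : a ^ 2 + b ^ 2 = 1) (Q D : Mat3)
    (hQ : Q = (Rn a b)ᵀ * D * Rn a b) (μ : ℝ) (w : Fin 3 → ℝ) (hv : IsEigen D μ w) :
    IsEigen Q μ ((Rn a b)ᵀ *ᵥ w) := by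
  unfold IsEigen at *
  have : Q * (Rn a b)ᵀ = (Rn a b)ᵀ * D := by
    rw [hQ, Matrix.mul_assoc, R_RT a b h, Matrix.mul_one]
  rw [Matrix.mulVec_mulVec, this, ← Matrix.mulVec_mulVec, hv, Matrix.mulVec_smul]

lemma RT_vec (a b x y z : ℝ) : (Rn a b)ᵀ *ᵥ ![x, y, z] =
    ![b ^ 2 * x - a * b * y + a * z, - (a * b) * x + a ^ 2 * y + b * z, - a * x - b * y] := by
  ext i
  fin_cases i <;> simp [Rn, Matrix.mulVec, dotProduct, Fin.sum_univ_three] <;> ring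

lemma D_eig (l m11 m12 m22 μ : ℝ) (w : Fin 3 → ℝ) :
    IsEigen (Dm l m11 m12 m22) μ w ↔
      (-(l * m11) * w 0 + -(l * m12) * w 1 = μ * w 0 ∧
       -(l * m12) * w 0 + -(l * m22) * w 1 = μ * w 1 ∧ l * w 2 = μ * w 2) := by
  unfold IsEigen
  rw [funext_iff, Fin.forall_fin_succ, Fin.forall_fin_succ, Fin.forall_fin_succ]
  simp [Dm, Matrix.mulVec, dotProduct, Fin.sum_univ_three]

lemma cond_scale {m11 m12 m22 : ℝ} (hM : MprimeCond m11 m12 m22) (x y : ℝ)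
    (h : 0 < x ^ 2 + y ^ 2) :
    -(x ^ 2 + y ^ 2) < m11 * x ^ 2 + 2 * m12 * x * y + m22 * y ^ 2 := by
  set r := Real.sqrt (x ^ 2 + y ^ 2) with hr
  have hr0 : 0 < r := Real.sqrt_pos.mpr h
  have hr2 : r ^ 2 = x ^ 2 + y ^ 2 := Real.sq_sqrt h.le
  have h1 := hM (x / r) (y / r) (by field_simp; linarith)
  have h2 : m11 * (x / r) ^ 2 + 2 * m12 * (x / r) * (y / r) + m22 * (y / r) ^ 2
      = (m11 * x ^ 2 + 2 * m12 * x * y + m22 * y ^ 2) / r ^ 2 := by field_simp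
  rw [h2, lt_div_iff₀ (by positivity)] at h1
  linarith

lemma two_by_two (p q r : ℝ) : ∃ μ x y : ℝ, 0 < x ^ 2 + y ^ 2 ∧ p * x + q * y = μ * x ∧
    q * x + r * y = μ * y ∧
    ∀ v w : ℝ, p * v ^ 2 + 2 * q * v * w + r * w ^ 2 ≤ μ * (v ^ 2 + w ^ 2) := by
  by_cases hq : q = 0
  · subst hq
    rcases le_total p r with h | h
    · exact ⟨r, 0, 1, by norm_num, by ring, by ring, fun v w => by nlinarith [sq_nonneg v]⟩
    · exact ⟨p, 1, 0, by norm_num, by ring, by ring, fun v w => by nlinarith [sq_nonneg w]⟩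
  · have hnn : 0 ≤ (p - r) ^ 2 + 4 * q ^ 2 := by positivity
    set S := Real.sqrt ((p - r) ^ 2 + 4 * q ^ 2) with hS
    have hS2 : S ^ 2 = (p - r) ^ 2 + 4 * q ^ 2 := Real.sq_sqrt hnn
    have hS0 : 0 ≤ S := Real.sqrt_nonneg _
    have hq2 : 0 < q ^ 2 := by positivity
    have hp : 0 < (p + r + S) / 2 - p := by
      have : p - r < S := by
        apply Real.lt_sqrt_of_sq_lt; linarith
      linarith
    obtain ⟨μ, hμ⟩ : ∃ μ, μ = (p + r + S) / 2 := ⟨_, rfl⟩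
    rw [← hμ] at hp
    have key : (μ - p) * (μ - r) = q ^ 2 := by subst hμ; linear_combination hS2 / 4
    refine ⟨μ, q, μ - p, by positivity, by ring, by linear_combination -key, fun v w => ?_⟩
    have h1 : 0 ≤ (μ - p) * (μ * (v ^ 2 + w ^ 2) - (p * v ^ 2 + 2 * q * v * w + r * w ^ 2)) := by
      have : (μ - p) * (μ * (v ^ 2 + w ^ 2) - (p * v ^ 2 + 2 * q * v * w + r * w ^ 2))
        = ((μ - p) * v - q * w) ^ 2 := by linear_combination w ^ 2 * key
      rw [this]; positivity
    have := nonneg_of_mul_nonneg_right h1 hp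
    linarith

lemma fwd (Q : Mat3) (hQ0 : Q ∈ Sym0) (hQ : Q ∈ TsetM) :
    ∃ lam n₁ n₂ m11 m12 m22 : ℝ, 0 < lam ∧ n₁ ^ 2 + n₂ ^ 2 = 1 ∧
        m11 + m22 = 1 ∧ MprimeCond m11 m12 m22 ∧
        Q = Tparam lam n₁ n₂ m11 m12 m22 := by
  obtain ⟨-, -, l, n, ⟨⟨hu, he, hmax⟩, hs⟩, hn2⟩ := hQ
  obtain ⟨hsym, htr⟩ := hQ0
  obtain ⟨a, ha⟩ : ∃ a, a = n 0 := ⟨_, rfl⟩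
  obtain ⟨b, hb⟩ : ∃ b, b = n 1 := ⟨_, rfl⟩
  have hn : n = ![a, b, 0] := by
    ext i; fin_cases i <;> simp [ha, hb, hn2]
  clear ha hb hn2
  subst hn
  have h : a ^ 2 + b ^ 2 = 1 := by simpa [unitVec, Fin.sum_univ_three] using hu
  obtain ⟨P, hP⟩ : ∃ P, Rn a b * Q * (Rn a b)ᵀ = P := ⟨_, rfl⟩
  have hQP := of_conj a b h Q P hP
  have hPs : Pᵀ = P := by
    rw [← hP]; simp only [Matrix.transpose_mul, Matrix.transpose_transpose, hsym.eq,
      Matrix.mul_assoc]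
  have hPt : P 0 0 + P 1 1 + P 2 2 = 0 := by
    have : P.trace = 0 := by
      rw [← hP, Matrix.trace_mul_comm, ← Matrix.mul_assoc, RT_R a b h, Matrix.one_mul, htr]
    simpa [Matrix.trace, Fin.sum_univ_three] using this
  have hRn : Rn a b *ᵥ ![a, b, 0] = ![0, 0, 1] := by
    have : ![a, b, 0] = (Rn a b)ᵀ *ᵥ ![0, 0, 1] := by rw [RT_vec]; simp
    rw [this, Matrix.mulVec_mulVec, R_RT a b h, Matrix.one_mulVec]
  have hPe := eig_fwd a b h Q P hQP l _ he
  rw [hRn] at hPe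
  unfold IsEigen at hPe
  have e0 := congrFun hPe 0
  have e1 := congrFun hPe 1
  have e2 := congrFun hPe 2
  simp [Matrix.mulVec, dotProduct, Fin.sum_univ_three] at e0 e1 e2
  have s01 : P 1 0 = P 0 1 := congrFun (congrFun hPs 0) 1
  have s02 : P 2 0 = P 0 2 := congrFun (congrFun hPs 0) 2
  have s12 : P 2 1 = P 1 2 := congrFun (congrFun hPs 1) 2
  obtain ⟨μ, x, y, hxy, hx, hy, hform⟩ := two_by_two (P 0 0) (P 0 1) (P 1 1)
  have hE : IsEigen P μ ![x, y, 0] := by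
    unfold IsEigen
    ext i
    fin_cases i <;> simp [Matrix.mulVec, dotProduct, Fin.sum_univ_three, s01, s02, s12, e0, e1,
      hx, hy]
  have hQE := eig_bwd a b h Q P hQP μ _ hE
  have hback : ∀ t : ℝ, (Rn a b)ᵀ *ᵥ ![x, y, 0] ≠ t • ![a, b, 0] := by
    intro t ht
    have h2 := congrArg (fun u => Rn a b *ᵥ u) ht
    simp only [Matrix.mulVec_mulVec, R_RT a b h, Matrix.one_mulVec, Matrix.mulVec_smul,
      hRn] at h2
    have hx0 := congrFun h2 0
    have hy0 := congrFun h2 1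
    simp at hx0 hy0
    simp [hx0, hy0] at hxy
  have hle : μ ≤ l := hmax μ _ (by simpa using hback 0) hQE
  have hlt : μ < l := by
    refine lt_of_le_of_ne hle ?_
    rintro rfl
    obtain ⟨t, ht⟩ := hs _ hQE
    exact hback t ht
  have hl : 0 < l := by
    have h1 := hform 1 0
    have h2 := hform 0 1
    linarith
  refine ⟨l, a, b, -(P 0 0) / l, -(P 0 1) / l, -(P 1 1) / l, hl, h, ?_, ?_, ?_⟩
  · field_simp; linarith
  · intro v w hvw
    have h1 := hform v w
    rw [hvw] at h1
    have : -(P 0 0) / l * v ^ 2 + 2 * (-(P 0 1) / l) * v * w + -(P 1 1) / l * w ^ 2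
      = -(P 0 0 * v ^ 2 + 2 * P 0 1 * v * w + P 1 1 * w ^ 2) / l := by field_simp; ring
    rw [this, lt_div_iff₀ hl]
    linarith
  · rw [Tparam_eq, hQP]
    congr 2
    ext i j
    have := hl.ne'
    fin_cases i <;> fin_cases j <;> simp [Dm, s01, s02, s12, e0, e1, e2] <;> field_simp

lemma bwd (Q : Mat3) (hQ0 : Q ∈ Sym0) (l a b m11 m12 m22 : ℝ) (hl : 0 < l)
    (h : a ^ 2 + b ^ 2 = 1) (hM : MprimeCond m11 m12 m22)
    (hQ : Q = Tparam l a b m11 m12 m22) : Q ∈ TsetM := by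
  rw [Tparam_eq] at hQ
  have hn : (Rn a b)ᵀ *ᵥ ![0, 0, 1] = ![a, b, 0] := by rw [RT_vec]; simp
  have hu : unitVec ![a, b, 0] := by simpa [unitVec, Fin.sum_univ_three] using h
  have hE : IsEigen Q l ![a, b, 0] := by
    rw [← hn]
    apply eig_bwd a b h Q _ hQ
    rw [D_eig]; simp
  have hinv : ∀ v : Fin 3 → ℝ, v = (Rn a b)ᵀ *ᵥ (Rn a b *ᵥ v) := by
    intro v; rw [Matrix.mulVec_mulVec, RT_R a b h, Matrix.one_mulVec]
  have main : ∀ (μ : ℝ) (v : Fin 3 → ℝ), IsEigen Q μ v → l ≤ μ →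
      v = ((Rn a b *ᵥ v) 2) • ![a, b, 0] := by
    intro μ v hv hμ
    have h1 := (D_eig _ _ _ _ _ _).mp (eig_fwd a b h Q _ hQ μ v hv)
    have h2 := hinv v
    generalize Rn a b *ᵥ v = w at h1 h2 ⊢
    obtain ⟨h3, h4, -⟩ := h1
    have h5 : ¬ 0 < (w 0) ^ 2 + (w 1) ^ 2 := by
      intro hp
      have h6 := cond_scale hM _ _ hp
      have h7 := mul_lt_mul_of_pos_left h6 hl
      have h8 := mul_le_mul_of_nonneg_right hμ hp.le
      have h9 : -(l * (m11 * w 0 ^ 2 + 2 * m12 * w 0 * w 1 + m22 * w 1 ^ 2))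
        = μ * (w 0 ^ 2 + w 1 ^ 2) := by linear_combination w 0 * h3 + w 1 * h4
      linarith
    have hw0 : w 0 = 0 := by
      by_contra hc
      exact h5 (by positivity)
    have hw1 : w 1 = 0 := by
      by_contra hc
      exact h5 (by positivity)
    have hw : w = w 2 • ![0, 0, 1] := by
      ext i; fin_cases i <;> simp [hw0, hw1]
    rw [h2, ← hn, ← Matrix.mulVec_smul, ← hw]
  refine ⟨hQ0, ?_, l, ![a, b, 0], ⟨⟨hu, hE, ?_⟩, ?_⟩, by simp⟩
  · rintro h0
    rw [h0] at hE
    unfold IsEigen at hE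
    rw [Matrix.zero_mulVec] at hE
    have h1 := congrFun hE 0
    have h2 := congrFun hE 1
    simp [hl.ne'] at h1 h2
    simp [h1, h2] at h
  · intro μ v hv0 hv
    by_contra hc
    push Not at hc
    have h1 := main μ v hv hc.le
    have h2 : IsEigen Q l v := by
      unfold IsEigen at *
      rw [h1, Matrix.mulVec_smul, hE, smul_comm]
    unfold IsEigen at hv h2
    have h3 : (μ - l) • v = 0 := by rw [sub_smul, ← hv, ← h2, sub_self]
    rcases smul_eq_zero.mp h3 with h4 | h4
    · linarith
    · exact hv0 h4
  · intro v hv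
    exact ⟨_, main l v hv le_rfl⟩

lemma conj_uniax (a b : ℝ) (h : a ^ 2 + b ^ 2 = 1) (s : ℝ) (m : Fin 3 → ℝ) :
    Rn a b * uniax s m * (Rn a b)ᵀ = uniax s (Rn a b *ᵥ m) := by
  unfold uniax
  rw [Matrix.mul_smul, Matrix.smul_mul, Matrix.mul_sub, Matrix.sub_mul, Matrix.mul_smul,
    Matrix.smul_mul, Matrix.mul_one, R_RT a b h, Matrix.mul_vecMulVec, Matrix.vecMulVec_mul,
    Matrix.vecMul_transpose]

lemma uni (l a b m11 m12 m22 : ℝ) (hl : 0 < l) (h : a ^ 2 + b ^ 2 = 1) (ht : m11 + m22 = 1) :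
      ((∃ s : ℝ, 0 < s ∧ ∃ m : Fin 3 → ℝ, unitVec m ∧
          Tparam l a b m11 m12 m22 = uniax s m) ↔
        (m11 = 1 / 2 ∧ m12 = 0 ∧ m22 = 1 / 2)) := by
  constructor
  · rintro ⟨s, hs, m, -, hm⟩
    have h1 := conj_of a b h _ _ (Tparam_eq l a b m11 m12 m22)
    rw [hm, conj_uniax a b h] at h1
    generalize Rn a b *ᵥ m = k at h1
    have f00 := congrFun (congrFun h1 0) 0
    have f01 := congrFun (congrFun h1 0) 1
    have f02 := congrFun (congrFun h1 0) 2
    have f11 := congrFun (congrFun h1 1) 1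
    have f12 := congrFun (congrFun h1 1) 2
    have f22 := congrFun (congrFun h1 2) 2
    simp [uniax, Dm, Matrix.vecMulVec_apply, hs.ne'] at f00 f01 f02 f11 f12 f22
    have hk : k 2 ≠ 0 := by
      intro h0
      rw [h0] at f22
      linarith
    simp [hk] at f02 f12
    rw [f02] at f00 f01
    rw [f12] at f11
    have g : l * (m11 - m22) = 0 := by linarith
    have g2 : l * m12 = 0 := by simpa using f01
    have g3 := (mul_eq_zero.mp g).resolve_left hl.ne'
    have g4 := (mul_eq_zero.mp g2).resolve_left hl.ne'
    exact ⟨by linarith, g4, by linarith⟩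
  · rintro ⟨rfl, rfl, rfl⟩
    refine ⟨3 / 2 * l, by positivity, ![a, b, 0], by
      simpa [unitVec, Fin.sum_univ_three] using h, ?_⟩
    have hRn : Rn a b *ᵥ ![a, b, 0] = ![0, 0, 1] := by
      have : ![a, b, 0] = (Rn a b)ᵀ *ᵥ ![0, 0, 1] := by rw [RT_vec]; simp
      rw [this, Matrix.mulVec_mulVec, R_RT a b h, Matrix.one_mulVec]
    rw [Tparam_eq]
    symm
    apply of_conj a b h
    rw [conj_uniax a b h, hRn]
    ext i j
    fin_cases i <;> fin_cases j <;> simp [uniax, Dm, Matrix.vecMulVec_apply] <;> ring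

theorem statement16 :
    (∀ Q ∈ Sym0,
      (Q ∈ TsetM ↔ ∃ lam n₁ n₂ m11 m12 m22 : ℝ, 0 < lam ∧ n₁ ^ 2 + n₂ ^ 2 = 1 ∧
        m11 + m22 = 1 ∧ MprimeCond m11 m12 m22 ∧
        Q = Tparam lam n₁ n₂ m11 m12 m22)) ∧
    (∀ lam n₁ n₂ m11 m12 m22 : ℝ, 0 < lam → n₁ ^ 2 + n₂ ^ 2 = 1 →
      m11 + m22 = 1 → MprimeCond m11 m12 m22 →
      ((∃ s : ℝ, 0 < s ∧ ∃ m : Fin 3 → ℝ, unitVec m ∧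
          Tparam lam n₁ n₂ m11 m12 m22 = uniax s m) ↔
        (m11 = 1 / 2 ∧ m12 = 0 ∧ m22 = 1 / 2))) := by
  refine ⟨fun Q hQ => ⟨fwd Q hQ, ?_⟩, ?_⟩
  · rintro ⟨l, a, b, m11, m12, m22, hl, h, -, hM, hT⟩
    exact bwd Q hQ l a b m11 m12 m22 hl h hM hT
  · intro l a b m11 m12 m22 hl h ht _
    exact uni l a b m11 m12 m22 hl h ht
end
end

section
/- Let s > 0 and let n = (n₁, n₂, 0) ∈ ℝ³ be a unit vector, and set Q = s( n⊗n − (1/3)I ) ∈ 𝒯. Define N ∈ Sym₀ by N = s·[[0, 0, n₁], [0, 0, n₂], [n₁, n₂, 0]]. Then N is normal to 𝒯 at Q in the following sense: for every curve γ : (−1, 1) → Sym₀ that is differentiable at 0 with γ(0) = Q and γ(t) ∈ 𝒯 for all t ∈ (−1,1), one has ⟨γ'(0), N⟩ = 0, where ⟨·,·⟩ is the Frobenius inner product. -/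
/- STATEMENT 17: Let s > 0, n = (n₁,n₂,0) a unit vector, Q = s(n⊗n − (1/3)I) ∈ 𝒯, and
N = s[[0,0,n₁],[0,0,n₂],[n₁,n₂,0]]. Then N is normal to 𝒯 at Q: for every curve
γ : (−1,1) → Sym₀ differentiable at 0 with γ(0) = Q and γ(t) ∈ 𝒯 for all t,
⟨γ'(0), N⟩ = tr(γ'(0)·N) = 0 (Frobenius inner product). -/

noncomputable section

open Matrix Set

def toE (Q : Mat3) : E9 := (WithLp.equiv 2 _).symm (fun p => Q p.1 p.2)

lemma posAux (M : Mat3) (hM : M.IsSymm) (lam : ℝ)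
    (h : ∀ (μ : ℝ) (v : Fin 3 → ℝ), v ≠ 0 → IsEigen M μ v → μ ≤ lam) (x : Fin 3 → ℝ) :
    x ⬝ᵥ (M.mulVec x) ≤ lam * (x ⬝ᵥ x) := by
  have hH : (lam • (1 : Mat3) - M).IsHermitian := by
    unfold Matrix.IsHermitian
    rw [Matrix.conjTranspose_eq_transpose_of_trivial]
    simp [hM.eq]
  have hP : (lam • (1 : Mat3) - M).PosSemidef := by
    rw [hH.posSemidef_iff_eigenvalues_nonneg]
    intro i
    have he := hH.mulVec_eigenvectorBasis i
    have hne : (⇑(hH.eigenvectorBasis i) : Fin 3 → ℝ) ≠ 0 := by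
      intro h0
      apply hH.eigenvectorBasis.toBasis.ne_zero i
      ext j
      simpa using congrFun h0 j
    have := h (lam - hH.eigenvalues i) _ hne (by
      unfold IsEigen
      rw [Matrix.sub_mulVec, Matrix.smul_mulVec, Matrix.one_mulVec] at he
      rw [sub_smul, ← he]
      abel)
    simp only [Pi.zero_apply]
    linarith
  have := hP.dotProduct_mulVec_nonneg x
  rw [Matrix.sub_mulVec, Matrix.smul_mulVec, Matrix.one_mulVec] at this
  simp only [star_trivial, dotProduct_sub, dotProduct_smul, smul_eq_mul] at this
  linarith

lemma keyAux (A : E9) (hA : A ∈ TsetE) :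
    (∀ i j, A (i, j) = A (j, i)) ∧
    A (2,0) * (A (0,1) * A (2,0) + A (1,1) * A (2,1))
      - A (2,1) * (A (0,0) * A (2,0) + A (0,1) * A (2,1)) = 0 ∧
    2 * (A (2,0) * (A (0,0) * A (2,0) + A (0,1) * A (2,1))
      + A (2,1) * (A (0,1) * A (2,0) + A (1,1) * A (2,1)))
      ≤ (A (0,0) + A (1,1)) * (A (2,0) ^ 2 + A (2,1) ^ 2) := by
  obtain ⟨⟨hS, -⟩, -, lam, m, ⟨⟨hu, he, hmax⟩, -⟩, h2⟩ := hA
  have hs : ∀ i j, A (i, j) = A (j, i) := fun i j => hS.apply j i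
  refine ⟨hs, ?_⟩
  have hp := posAux _ hS lam hmax ![A (2,0), A (2,1), 0]
  have e0 := congrFun he 0
  have e1 := congrFun he 1
  have e2 := congrFun he 2
  unfold unitVec at hu
  simp [toM, Matrix.mulVec, dotProduct, Fin.sum_univ_three, h2] at e0 e1 e2 hu hp
  rw [hs 1 0] at e1 hp
  generalize A (0,0) = a at *
  generalize A (0,1) = b at *
  generalize A (1,1) = c at *
  generalize A (2,0) = p at *
  generalize A (2,1) = q at *
  generalize m 0 = x at *
  generalize m 1 = y at *
  obtain ⟨k, hk⟩ : ∃ k, k = q * x - p * y := ⟨_, rfl⟩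
  have hpk : p = -k * y := by
    subst hk
    linear_combination (-p) * hu + x * e2
  have hqk : q = k * x := by
    subst hk
    linear_combination (-q) * hu + y * e2
  -- B (-y, x) = (a + c - lam) (-y, x)
  have f0 : a * (-y) + b * x = (a + c - lam) * (-y) := by
    linear_combination e1
  have f1 : b * (-y) + c * x = (a + c - lam) * x := by
    linear_combination -e0
  have g0 : a * p + b * q = (a + c - lam) * p := by
    rw [hpk, hqk]; linear_combination k * f0
  have g1 : b * p + c * q = (a + c - lam) * q := by
    rw [hpk, hqk]; linear_combination k * f1
  constructor
  · rw [g0, g1]; ring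
  · have : p * (a * p + b * q) + q * (b * p + c * q) = (a + c - lam) * (p^2+q^2) := by
      rw [g0, g1]; ring
    nlinarith

open Filter Topology in
theorem statement17 (s n₁ n₂ : ℝ) (hs : 0 < s) (hn : n₁ ^ 2 + n₂ ^ 2 = 1)
    (γ : ℝ → E9) (d : E9) (hγ0 : γ 0 = toE (uniax s ![n₁, n₂, 0]))
    (hd : HasDerivAt γ d 0) (hγT : ∀ t ∈ Ioo (-1 : ℝ) 1, γ t ∈ TsetE) :
    ((toM d) * (s • !![0, 0, n₁; 0, 0, n₂; n₁, n₂, 0] : Mat3)).trace = 0 := by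
  
  have hc : ∀ i j, HasDerivAt (fun t => γ t (i, j)) (d (i, j)) 0 := by
    intro i j
    exact (EuclideanSpace.proj (𝕜 := ℝ) (i, j) : E9 →L[ℝ] ℝ).hasFDerivAt.comp_hasDerivAt 0 hd
  have hev : ∀ᶠ t in 𝓝[≠] (0:ℝ), γ t ∈ TsetE :=
    nhdsWithin_le_nhds (by
      filter_upwards [Ioo_mem_nhds (by norm_num : (-1:ℝ) < 0) (by norm_num : (0:ℝ) < 1)] with t ht
      exact hγT t ht)
  have hev0 : ∀ᶠ t in 𝓝[≠] (0:ℝ), t ≠ 0 := eventually_mem_nhdsWithin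
  have hcont : ∀ i j, Tendsto (fun t => γ t (i, j)) (𝓝[≠] 0) (𝓝 (uniax s ![n₁, n₂, 0] i j)) := by
    intro i j
    have := (hc i j).continuousAt.tendsto.mono_left (nhdsWithin_le_nhds (s := {0}ᶜ))
    simpa [hγ0, toE] using this
  have hsl : ∀ i j, Tendsto (fun t => t⁻¹ * (γ t (i, j) - uniax s ![n₁, n₂, 0] i j)) (𝓝[≠] 0)
      (𝓝 (d (i, j))) := by
    intro i j
    have := (hasDerivAt_iff_tendsto_slope_zero.1 (hc i j))
    simpa [hγ0, toE] using this
  have hU : ∀ i j, uniax s ![n₁, n₂, 0] i j = uniax s ![n₁, n₂, 0] j i := by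
    intro i j
    fin_cases i <;> fin_cases j <;> simp [uniax, Matrix.vecMulVec, mul_comm]
  have hdsym : ∀ i j, d (i, j) = d (j, i) := by
    intro i j
    refine tendsto_nhds_unique_of_eventuallyEq (hsl i j) (hsl j i) ?_
    filter_upwards [hev] with t ht
    rw [(keyAux _ ht).1 i j, hU i j]
  have h20 : Tendsto (fun t => t⁻¹ * γ t (2, 0)) (𝓝[≠] 0) (𝓝 (d (2, 0))) := by
    simpa [uniax, Matrix.vecMulVec] using hsl 2 0
  have h21 : Tendsto (fun t => t⁻¹ * γ t (2, 1)) (𝓝[≠] 0) (𝓝 (d (2, 1))) := by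
    simpa [uniax, Matrix.vecMulVec] using hsl 2 1
  have c00 := hcont 0 0
  have c01 := hcont 0 1
  have c11 := hcont 1 1
  simp [uniax, Matrix.vecMulVec] at c00 c01 c11
  have k1 := tendsto_nhds_unique_of_eventuallyEq
    ((h20.mul ((c01.mul h20).add (c11.mul h21))).sub
      (h21.mul ((c00.mul h20).add (c01.mul h21)))) (tendsto_const_nhds (x := (0:ℝ))) (by
    filter_upwards [hev] with t ht
    linear_combination t⁻¹ ^ 2 * (keyAux _ ht).2.1)
  have k2 := le_of_tendsto_of_tendsto
    (((h20.mul ((c00.mul h20).add (c01.mul h21))).add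
      (h21.mul ((c01.mul h20).add (c11.mul h21)))).const_mul 2)
    ((c00.add c11).mul ((h20.pow 2).add (h21.pow 2))) (by
    filter_upwards [hev] with t ht
    have := mul_le_mul_of_nonneg_left (keyAux _ ht).2.2 (sq_nonneg t⁻¹)
    linarith)
  have s02 := hdsym 0 2
  have s12 := hdsym 1 2
  simp [toM, Matrix.trace, Matrix.mul_apply, Fin.sum_univ_three]
  rw [s02, s12]
  generalize d (2,0) = p at *
  generalize d (2,1) = q at *
  obtain ⟨al, hal⟩ : ∃ al, al = p * n₁ + q * n₂ := ⟨_, rfl⟩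
  obtain ⟨be, hbe⟩ : ∃ be, be = q * n₁ - p * n₂ := ⟨_, rfl⟩
  have hN : p ^ 2 + q ^ 2 = al ^ 2 + be ^ 2 := by
    rw [hal, hbe]; linear_combination (-(p ^ 2 + q ^ 2)) * hn
  have m1 : s * (al * be) = 0 := by
    rw [hal, hbe]; linear_combination -k1
  have m2 : s * (al ^ 2 - be ^ 2) ≤ 0 := by
    have e1 : al ^ 2 - be ^ 2 = 2 * al ^ 2 - (n₁ ^ 2 + n₂ ^ 2) * (p ^ 2 + q ^ 2) := by
      rw [hn, hN]; ring
    rw [e1, hal]; linarith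
  have m3 : al = 0 := by
    have h1 : al * be = 0 := (mul_eq_zero.1 m1).resolve_left hs.ne'
    have h2 : al ^ 2 - be ^ 2 ≤ 0 := by
      by_contra h
      push Not at h
      nlinarith [mul_pos hs h]
    rcases mul_eq_zero.1 h1 with h | h
    · exact h
    · rw [h] at h2
      exact pow_eq_zero_iff (two_ne_zero) |>.1 (le_antisymm (by linarith) (sq_nonneg al))
  rw [hal] at m3
  linear_combination 2 * s * m3
end
end

section
/- There exist constants C > 0 and α₀ > 0 such that for every α ∈ (0, α₀) and every Q ∈ 𝒩 one has H⁴( B_α(Q) ∩ 𝒯 ) ≤ C·α⁴, where H⁴ denotes the 4-dimensional Hausdorff measure on the 5-dimensional Euclidean space Sym₀ and B_α(Q) is the open ball of radius α about Q in Sym₀. -/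
/- STATEMENT 18: There exist C > 0 and α₀ > 0 such that for every α ∈ (0,α₀) and every
Q ∈ 𝒩, H⁴(B_α(Q) ∩ 𝒯) ≤ C·α⁴, where H⁴ is the 4-dimensional Hausdorff measure on the
5-dimensional Euclidean space Sym₀ (computed in the ambient Euclidean/Frobenius space). -/

noncomputable section

open Matrix MeasureTheory Metric Set

def FF (p : Fin 4 → ℝ) : E9 := WithLp.toLp 2 fun ij =>
  (!![p 1 * Real.cos (p 0) ^ 2 + p 2 * Real.sin (p 0) ^ 2,
      (p 1 - p 2) * (Real.cos (p 0) * Real.sin (p 0)), - (p 3 * Real.sin (p 0));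
      (p 1 - p 2) * (Real.cos (p 0) * Real.sin (p 0)),
      p 1 * Real.sin (p 0) ^ 2 + p 2 * Real.cos (p 0) ^ 2, p 3 * Real.cos (p 0);
      - (p 3 * Real.sin (p 0)), p 3 * Real.cos (p 0), - (p 1 + p 2)] : Mat3) ij.1 ij.2

lemma FF_contDiff : ContDiff ℝ 1 FF := by
  rw [contDiff_euclidean]
  rintro ⟨i, j⟩
  fin_cases i <;> fin_cases j <;> simp [FF] <;> fun_prop

lemma FF_lip (R : ℝ) : ∃ K, LipschitzOnWith K FF (closedBall 0 R) :=
  LocallyLipschitzOn.exists_lipschitzOnWith_of_compact (isCompact_closedBall _ _)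
    FF_contDiff.locallyLipschitz.locallyLipschitzOn

lemma bil (E : Fin 3 → Fin 3 → ℝ) (α : ℝ) (hE : ∀ i j, |E i j| ≤ α) (u v : Fin 3 → ℝ)
    (hu : ∀ i, |u i| ≤ 1) (hv : ∀ i, |v i| ≤ 1) : |∑ i, ∑ j, u i * E i j * v j| ≤ 9 * α := by
  have hα : 0 ≤ α := (abs_nonneg _).trans (hE 0 0)
  have h : ∀ i j, |u i * E i j * v j| ≤ α := by
    intro i j
    rw [abs_mul, abs_mul]
    calc |u i| * |E i j| * |v j| ≤ 1 * α * 1 := by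
          gcongr
          · exact hu i
          · exact hE i j
          · exact hv j
      _ = α := by ring
  calc |∑ i, ∑ j, u i * E i j * v j| ≤ ∑ i : Fin 3, ∑ j : Fin 3, |u i * E i j * v j| :=
        (Finset.abs_sum_le_sum_abs _ _).trans
          (Finset.sum_le_sum fun i _ => Finset.abs_sum_le_sum_abs _ _)
    _ ≤ ∑ i : Fin 3, ∑ j : Fin 3, α :=
        Finset.sum_le_sum fun i _ => Finset.sum_le_sum fun j _ => h i j
    _ = 9 * α := by simp; ring

lemma unit_le {n : Fin 3 → ℝ} (h : unitVec n) (i : Fin 3) : |n i| ≤ 1 := by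
  unfold unitVec at h
  rw [Fin.sum_univ_three] at h
  rw [← sq_le_one_iff_abs_le_one]
  fin_cases i <;> simp only [Fin.zero_eta, Fin.mk_one, Fin.reduceFinMk] <;> nlinarith [sq_nonneg (n 0), sq_nonneg (n 1), sq_nonneg (n 2)]

lemma rayleigh_s18 (A : Mat3) (hA : A.IsSymm) (lam : ℝ)
    (h : ∀ (μ : ℝ) (v : Fin 3 → ℝ), v ≠ 0 → IsEigen A μ v → μ ≤ lam) (m : Fin 3 → ℝ)
    (hm : unitVec m) : ∑ i, ∑ j, m i * A i j * m j ≤ lam := by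
  have hB : (lam • (1 : Mat3) - A).IsHermitian := by
    unfold Matrix.IsHermitian
    rw [Matrix.conjTranspose_eq_transpose_of_trivial]
    simp [hA.eq]
  have hP : (lam • (1 : Mat3) - A).PosSemidef := by
    rw [hB.posSemidef_iff_eigenvalues_nonneg]
    intro i
    have h1 := hB.mulVec_eigenvectorBasis i
    have h2 := h (lam - hB.eigenvalues i) (hB.eigenvectorBasis i).ofLp ?_ ?_
    · simpa using h2
    · intro h0
      have := hB.eigenvectorBasis.orthonormal.ne_zero i
      apply this
      ext j
      simpa using congrFun h0 j
    · unfold IsEigen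
      rw [Matrix.sub_mulVec, Matrix.smul_mulVec, Matrix.one_mulVec] at h1
      rw [sub_smul, ← h1]
      simp
  have h3 := hP.dotProduct_mulVec_nonneg m
  unfold unitVec at hm
  simp [dotProduct, Matrix.mulVec, Fin.sum_univ_three, Matrix.one_apply] at h3 hm ⊢
  linear_combination h3 + lam * hm

lemma arcsin_bd (x : ℝ) (h1 : -1 ≤ x) (h2 : x ≤ 1) : |Real.arcsin x| ≤ 2 * |x| := by
  have key : ∀ y : ℝ, 0 ≤ y → y ≤ 1 → Real.arcsin y ≤ 2 * y := by
    intro y h0 hy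
    have h := Real.mul_le_sin (Real.arcsin_nonneg.2 h0) (Real.arcsin_le_pi_div_two y)
    rw [Real.sin_arcsin (by linarith) hy] at h
    have hpi := Real.pi_pos
    rw [div_mul_eq_mul_div, div_le_iff₀ hpi] at h
    nlinarith [Real.pi_le_four]
  rcases le_total 0 x with h | h
  · rw [abs_of_nonneg h, abs_of_nonneg (Real.arcsin_nonneg.2 h)]
    exact key x h h2
  · rw [abs_of_nonpos h, abs_of_nonpos (Real.arcsin_nonpos.2 h), ← Real.arcsin_neg]
    exact key _ (by linarith) (by linarith)

lemma angle (θ ρ m0 m1 n0 n1 d : ℝ) (hρ : 1 / 2 ≤ ρ) (h0 : ρ * Real.cos θ = m0)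
    (h1 : ρ * Real.sin θ = m1) (hn : n0 ^ 2 + n1 ^ 2 = 1) (hp : 0 ≤ m0 * n0 + m1 * n1)
    (hd : |m0 * n1 - m1 * n0| ≤ d) :
    ∃ θ', |θ' - θ| ≤ 4 * d ∧ Real.cos θ' = n0 ∧ Real.sin θ' = n1 := by
  have hρ0 : 0 < ρ := by linarith
  subst h0 h1
  have hcs := Real.sin_sq_add_cos_sq θ
  set c := Real.cos θ
  set s := Real.sin θ
  have hy : 0 ≤ c * n0 + s * n1 := by
    by_contra hneg
    push Not at hneg
    nlinarith [mul_pos hρ0 (neg_pos.2 hneg)]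
  set x := c * n1 - s * n0 with hx
  have hxy : (c * n0 + s * n1) ^ 2 = 1 - x ^ 2 := by
    rw [hx]
    linear_combination (n0 ^ 2 + n1 ^ 2) * hcs + hn
  have hx1 : x ^ 2 ≤ 1 := by nlinarith [sq_nonneg (c * n0 + s * n1)]
  have hx2 := abs_le.1 ((sq_le_one_iff_abs_le_one x).1 hx1)
  have hcos : Real.cos (Real.arcsin x) = c * n0 + s * n1 := by
    rw [Real.cos_arcsin, ← hxy, Real.sqrt_sq hy]
  have hsin := Real.sin_arcsin hx2.1 hx2.2
  refine ⟨θ + Real.arcsin x, ?_, ?_, ?_⟩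
  · have h := arcsin_bd x hx2.1 hx2.2
    have h' : ρ * c * n1 - ρ * s * n0 = ρ * x := by rw [hx]; ring
    rw [h', abs_mul, abs_of_pos hρ0] at hd
    rw [add_sub_cancel_left]
    nlinarith [abs_nonneg x]
  · rw [Real.cos_add, hcos, hsin]
    change c * (c * n0 + s * n1) - s * x = n0
    rw [hx]
    linear_combination n0 * hcs
  · rw [Real.sin_add, hcos, hsin]
    change s * (c * n0 + s * n1) + c * x = n1
    rw [hx]
    linear_combination n1 * hcs

set_option maxHeartbeats 1000000 in
lemma main_param (s : ℝ) (hs : 0 < s) (α : ℝ) (hα : α < s / 36) (Q : E9) (m : Fin 3 → ℝ)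
    (hm : unitVec m) (hQ : toM Q = uniax s m) (A : E9) (hA : A ∈ ball Q α) (hT : A ∈ TsetE) :
    ∃ p ∈ closedBall (![Complex.arg ⟨m 0, m 1⟩, 2 * s / 3, - s / 3, 0] : Fin 4 → ℝ)
      ((72 / s + 54) * α), FF p = A := by
  obtain ⟨⟨hsym, htr⟩, -, lam, n, ⟨⟨hn, heig, hmax⟩, -⟩, hn2⟩ := hT
  -- choose the sign
  obtain ⟨n, hn, heig, hn2, hpos⟩ : ∃ n : Fin 3 → ℝ, unitVec n ∧ IsEigen (toM A) lam n ∧ n 2 = 0 ∧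
      0 ≤ m 0 * n 0 + m 1 * n 1 := by
    rcases le_total 0 (m 0 * n 0 + m 1 * n 1) with h | h
    · exact ⟨n, hn, heig, hn2, h⟩
    · refine ⟨-n, by simpa [unitVec] using hn, ?_, by simp [hn2], by simp; linarith⟩
      unfold IsEigen at heig ⊢
      rw [Matrix.mulVec_neg, heig, smul_neg]
  have hray := rayleigh_s18 _ hsym lam hmax m hm
  have hα0 : 0 < α := by
    have := dist_nonneg.trans_lt (mem_ball.1 hA); exact this
  have hE : ∀ i j, |A (i, j) - Q (i, j)| ≤ α := by
    intro i j
    have h1 := PiLp.norm_apply_le (A - Q) (i, j)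
    rw [mem_ball, dist_eq_norm] at hA
    simpa using h1.trans hA.le
  have hQe : ∀ i j, Q (i, j) = s * (m i * m j - 1 / 3 * (1 : Mat3) i j) := by
    intro i j
    have := congrFun (congrFun hQ i) j
    simpa [toM, uniax, Matrix.vecMulVec_apply] using this
  have bE := bil (fun i j => A (i, j) - Q (i, j)) α hE
  have mle := unit_le hm
  have nle := unit_le hn
  have Bmm := bE m m mle mle
  have Bnn := bE n n nle nle
  have Bwn := bE ![-m 1, m 0, 0] n
    (by intro i; fin_cases i <;> simp [mle]) nle
  have B22 := bE ![0, 0, 1] ![0, 0, 1]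
    (by intro i; fin_cases i <;> simp) (by intro i; fin_cases i <;> simp)
  have B2p := bE ![0, 0, 1] ![-n 1, n 0, 0]
    (by intro i; fin_cases i <;> simp) (by intro i; fin_cases i <;> simp [nle])
  clear bE
  have e0 := congrFun heig 0
  have e1 := congrFun heig 1
  have e2 := congrFun heig 2
  have s01 : A (1, 0) = A (0, 1) := hsym.apply 0 1
  have s02 : A (2, 0) = A (0, 2) := hsym.apply 0 2
  have s12 : A (2, 1) = A (1, 2) := hsym.apply 1 2
  unfold unitVec at hm hn
  simp only [Fin.sum_univ_three, hn2] at hm hn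
  simp [toM, Matrix.trace, Fin.sum_univ_three] at htr
  simp [toM, Matrix.mulVec, dotProduct, Fin.sum_univ_three, hn2] at e0 e1 e2
  simp [toM, Fin.sum_univ_three] at hray
  simp [Fin.sum_univ_three, hQe, Matrix.one_apply, hn2] at Bmm Bnn Bwn B22 B2p
  rw [s01, s02, s12] at hray Bmm
  rw [s01] at Bnn Bwn e1
  rw [s02, s12] at e2 B2p
  have hn' : n 0 ^ 2 + n 1 ^ 2 = 1 := by linarith
  have bmm := abs_le.1 Bmm
  have bnn := abs_le.1 Bnn
  set k := m 0 * n 0 + m 1 * n 1 with hk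
  set d := m 0 * n 1 - m 1 * n 0 with hd
  have L1 : 2 * s / 3 - 9 * α ≤ lam := by
    linear_combination hray + bmm.1 - s * (m 0 ^ 2 + m 1 ^ 2 + m 2 ^ 2 + 2 / 3) * hm
  have L2 : lam ≤ s * (k ^ 2 - 1 / 3) + 9 * α := by
    rw [hk]
    linear_combination bnn.2 - n 0 * e0 - n 1 * e1 - (lam + s / 3) * hn'
  have L3 : s * (k ^ 2 - 1 / 3) - 9 * α ≤ lam := by
    rw [hk]
    linear_combination bnn.1 + n 0 * e0 + n 1 * e1 + (lam + s / 3) * hn'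
  have Dd : |(lam + s / 3) * d| ≤ 9 * α := by
    convert Bwn using 2
    rw [hd]
    linear_combination m 1 * e0 - m 0 * e1
  clear Bmm Bnn bmm bnn Bwn hray
  have hkd : k ^ 2 + d ^ 2 + m 2 ^ 2 = 1 := by
    rw [hk, hd]
    linear_combination hm + (m 0 ^ 2 + m 1 ^ 2) * hn'
  have hk2 : k ^ 2 ≤ 1 := by linarith [sq_nonneg d, sq_nonneg (m 2)]
  have hsk2 : s * k ^ 2 ≤ s * 1 := mul_le_mul_of_nonneg_left hk2 hs.le
  have hsk : s - 18 * α ≤ s * k ^ 2 := by linarith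
  have hd2 : |d| ≤ 18 * α / s := by
    rw [abs_mul, abs_of_pos (by linarith)] at Dd
    rw [le_div_iff₀ hs]
    have : (s * (3 / 4)) * |d| ≤ (lam + s / 3) * |d| :=
      mul_le_mul_of_nonneg_right (by linarith) (abs_nonneg d)
    linarith
  have hm2 : s * m 2 ^ 2 ≤ 18 * α := by
    have : m 2 ^ 2 ≤ 1 - k ^ 2 := by linarith [sq_nonneg d]
    have := mul_le_mul_of_nonneg_left this hs.le
    linarith
  have h22 : |A (2, 2) + s / 3| ≤ 27 * α := by
    have b22 := abs_le.1 B22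
    rw [abs_le]
    have : 0 ≤ s * m 2 ^ 2 := by positivity
    constructor <;> linarith
  have hlam : |lam - 2 * s / 3| ≤ 18 * α := by
    rw [abs_le]
    constructor
    · linarith
    · linarith
  have hb : |A (1, 2) * n 0 - A (0, 2) * n 1| ≤ 27 * α := by
    have h1 : A (1, 2) * n 0 - A (0, 2) * n 1 =
        (A (1, 2) * n 0 - A (0, 2) * n 1 + s * m 2 * d) - s * m 2 * d := by ring
    have h2 : |A (1, 2) * n 0 - A (0, 2) * n 1 + s * m 2 * d| ≤ 9 * α := by
      convert B2p using 2
      rw [hd]; ring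
    have h3 : |s * m 2 * d| ≤ 18 * α := by
      rw [abs_mul, abs_mul, abs_of_pos hs]
      rw [le_div_iff₀ hs] at hd2
      have := mle 2
      have := mul_le_mul_of_nonneg_left this (mul_nonneg hs.le (abs_nonneg d))
      linarith
    rw [h1]
    calc _ ≤ _ := abs_sub _ _
      _ ≤ 27 * α := by linarith
  have hρ : 1 / 2 ≤ ‖(⟨m 0, m 1⟩ : ℂ)‖ := by
    have h1 : ‖(⟨m 0, m 1⟩ : ℂ)‖ ^ 2 = m 0 ^ 2 + m 1 ^ 2 := by
      rw [Complex.sq_norm, Complex.normSq_mk]; ring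
    have h2 : 1 / 2 ≤ k ^ 2 := le_of_mul_le_mul_left (by linarith) hs
    have h3 : 1 / 2 ≤ m 0 ^ 2 + m 1 ^ 2 := by linarith [sq_nonneg d]
    have h4 := norm_nonneg (⟨m 0, m 1⟩ : ℂ)
    rw [← h1] at h3
    clear_value k d
    generalize ‖(⟨m 0, m 1⟩ : ℂ)‖ = x at h3 h4
    by_contra hx
    push Not at hx
    clear * - h3 h4 hx
    nlinarith
  obtain ⟨θ, hθ, hcos, hsin⟩ := angle _ _ (m 0) (m 1) (n 0) (n 1) (18 * α / s) hρ
    (Complex.norm_mul_cos_arg ⟨m 0, m 1⟩) (Complex.norm_mul_sin_arg ⟨m 0, m 1⟩) hn' hpos hd2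
  have hr : (72 / s + 54) * α = 4 * (18 * α / s) + 54 * α := by field_simp; ring
  have hq : 0 ≤ 18 * α / s := by positivity
  refine ⟨![θ, lam, - A (2, 2) - lam, A (1, 2) * n 0 - A (0, 2) * n 1], ?_, ?_⟩
  · rw [mem_closedBall, dist_pi_le_iff (by positivity), hr]
    intro i
    rw [Real.dist_eq]
    fin_cases i
    · simp; linarith
    · simp; linarith
    · simp
      rw [abs_le] at h22 hlam ⊢
      constructor <;> linarith
    · simp; linarith
  · ext ⟨i, j⟩
    fin_cases i <;> fin_cases j <;> simp [FF, hcos, hsin, s01, s02, s12]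
    · linear_combination A (0, 0) * hn' - n 0 * e0 + n 1 * e1 - n 1 ^ 2 * htr
    · linear_combination A (0, 1) * hn' - n 1 * e0 - n 0 * e1 + n 0 * n 1 * htr
    · linear_combination A (0, 2) * hn' - n 0 * e2
    · linear_combination A (0, 1) * hn' - n 1 * e0 - n 0 * e1 + n 0 * n 1 * htr
    · linear_combination A (1, 1) * hn' + n 0 * e0 - n 1 * e1 - n 0 ^ 2 * htr
    · linear_combination A (1, 2) * hn' - n 1 * e2
    · linear_combination A (0, 2) * hn' - n 0 * e2
    · linear_combination A (1, 2) * hn' - n 1 * e2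

theorem statement18 (sS : ℝ) (hsS : 0 < sS) :
    ∃ Cc > (0 : ℝ), ∃ α₀ > (0 : ℝ), ∀ α : ℝ, 0 < α → α < α₀ →
      ∀ Q ∈ NsetE sS, μH[4] (ball Q α ∩ TsetE) ≤ ENNReal.ofReal (Cc * α ^ 4) := by
  set r : ℝ := 72 / sS + 54 with hr
  have hr0 : 0 < r := by positivity
  obtain ⟨K, hK⟩ := FF_lip (Real.pi + sS + r * (sS / 36))
  refine ⟨((K : ℝ) + 1) ^ 4 * (2 * r) ^ 4, by positivity, sS / 36, by positivity, ?_⟩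
  rintro α hα0 hα Q ⟨m, hm, hQ⟩
  set p0 : Fin 4 → ℝ := ![Complex.arg ⟨m 0, m 1⟩, 2 * sS / 3, - sS / 3, 0] with hp0
  have hsub : ball Q α ∩ TsetE ⊆ FF '' closedBall p0 (r * α) := by
    rintro A ⟨hA, hT⟩
    exact main_param sS hsS α hα Q m hm hQ A hA hT
  have hp0n : ‖p0‖ ≤ Real.pi + sS := by
    have hpi := Real.pi_pos
    rw [pi_norm_le_iff_of_nonneg (by positivity)]
    intro i
    have harg := Complex.abs_arg_le_pi ⟨m 0, m 1⟩
    fin_cases i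
    · simp [hp0]; linarith
    · simp [hp0, abs_of_pos hsS]; linarith
    · simp [hp0, abs_of_pos hsS]; linarith
    · simp [hp0]; linarith
  have hball : closedBall p0 (r * α) ⊆ closedBall 0 (Real.pi + sS + r * (sS / 36)) := by
    apply closedBall_subset_closedBall'
    rw [dist_zero_right]
    have : r * α ≤ r * (sS / 36) := by gcongr
    linarith
  have hvol : μH[4] (closedBall p0 (r * α)) = ENNReal.ofReal ((2 * (r * α)) ^ 4) := by
    have h := hausdorffMeasure_pi_real (ι := Fin 4)
    have h2 := Real.volume_pi_closedBall p0 (r := r * α) (by positivity)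
    rw [← h] at h2
    simpa using h2
  calc μH[4] (ball Q α ∩ TsetE) ≤ μH[4] (FF '' closedBall p0 (r * α)) := measure_mono hsub
    _ ≤ (K : ENNReal) ^ (4 : ℝ) * μH[4] (closedBall p0 (r * α)) :=
        (hK.mono hball).hausdorffMeasure_image_le (by norm_num)
    _ ≤ ENNReal.ofReal (((K : ℝ) + 1) ^ 4) * ENNReal.ofReal ((2 * (r * α)) ^ 4) := by
        rw [hvol]
        gcongr
        have : (K : ENNReal) ^ (4 : ℝ) = ENNReal.ofReal ((K : ℝ) ^ 4) := by
          rw [ENNReal.ofReal_pow K.coe_nonneg, ENNReal.ofReal_coe_nnreal]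
          exact_mod_cast ENNReal.rpow_natCast (K : ENNReal) 4
        rw [this]
        apply ENNReal.ofReal_le_ofReal
        gcongr
        linarith
    _ = ENNReal.ofReal (((K : ℝ) + 1) ^ 4 * (2 * r) ^ 4 * α ^ 4) := by
        rw [← ENNReal.ofReal_mul (by positivity)]
        congr 1
        ring
end
end
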